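/- arXiv:0807.0706 — 3 statements merged into one kernel-verified Lean document; each statement's English description precedes it below -/
import Mathlib

section
/- Let R be a commutative noetherian ring and M an R-module. Then Ext^1_R(F, M) = 0 for every flat R-module F if and only if Ext^i_R(F, M) = 0 for every flat R-module F and every integer i ≥ 1. -/
/-!
Let `R` be a commutative noetherian ring and `M` an `R`-module. Then
`Ext¹_R(F, M) = 0` for every flat `R`-module `F` if and only if
`Ext^i_R(F, M) = 0` for every flat `R`-module `F` and every `i ≥ 1`.
-/

universe u

open CategoryTheory

attribute [local instance] HasDerivedCategory.standard
attribute [local instance] CategoryTheory.hasExt_of_hasDerivedCategory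

set_option synthInstance.maxHeartbeats 1000000
set_option maxHeartbeats 1000000

theorem flat_ker_of_surjective {R : Type u} [CommRing R] {P F : Type u}
    [AddCommGroup P] [Module R P] [AddCommGroup F] [Module R F]
    [Module.Flat R P] [Module.Flat R F] (f : P →ₗ[R] F) (hf : Function.Surjective f) :
    Module.Flat R (LinearMap.ker f) := by
  rw [Module.Flat.iff_rTensor_preserves_injective_linearMap]
  intro N N' _ _ _ _ g hg
  have h1 := LinearMap.lTensor_injective_of_exact_of_flat f hf (LinearMap.ker f).subtype
    (LinearMap.ker f).injective_subtype (LinearMap.exact_subtype_ker_map f) N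
  have h2 : Function.Injective (g.rTensor P) :=
    Module.Flat.rTensor_preserves_injective_linearMap g hg
  have h3 : ((LinearMap.ker f).subtype.lTensor N') ∘ₗ (g.rTensor (LinearMap.ker f)) =
      (g.rTensor P) ∘ₗ ((LinearMap.ker f).subtype.lTensor N) := by
    ext; simp
  have h4 : Function.Injective
      (((LinearMap.ker f).subtype.lTensor N') ∘ₗ (g.rTensor (LinearMap.ker f))) := by
    rw [h3]
    exact h2.comp h1
  exact Function.Injective.of_comp h4

theorem ext_one_vanishing_iff_ext_vanishing_of_flat
    (R : Type u) [CommRing R] [IsNoetherianRing R]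
    (M : Type u) [AddCommGroup M] [Module R M] :
    (∀ (F : Type u) [AddCommGroup F] [Module R F], Module.Flat R F →
        Subsingleton (Abelian.Ext (ModuleCat.of R F) (ModuleCat.of R M) 1)) ↔
      (∀ (F : Type u) [AddCommGroup F] [Module R F], Module.Flat R F →
        ∀ i : ℕ, 1 ≤ i →
          Subsingleton (Abelian.Ext (ModuleCat.of R F) (ModuleCat.of R M) i)) := by
  refine ⟨fun h F _ _ hF i hi => ?_, fun h F _ _ hF => h F hF 1 le_rfl⟩
  induction i, hi using Nat.le_induction generalizing F with
  | base => exact h F hF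
  | succ n hn ih =>
    let f : (F →₀ R) →ₗ[R] F := Finsupp.linearCombination R id
    have hf : Function.Surjective f :=
      Finsupp.linearCombination_surjective _ Function.surjective_id
    have hS := LinearMap.shortExact_shortComplexKer hf
    have hK := ih (LinearMap.ker f) inferInstance inferInstance (flat_ker_of_surjective f hf)
    have hP : Projective f.shortComplexKer.X₂ :=
      ModuleCat.projective_of_categoryTheory_projective (ModuleCat.of R (F →₀ R))
    refine subsingleton_of_forall_eq 0 fun x => ?_
    obtain ⟨y, hy⟩ := precomp_extClass_surjective_of_projective_X₂ (ModuleCat.of R M) hS n x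
    have : y = 0 := @Subsingleton.elim _ hK _ _
    rw [← hy, this, map_zero]
end

section
/- Let φ : R → S be a faithfully flat homomorphism of commutative noetherian rings and assume the Krull dimension of S is finite. An R-module M is Gorenstein injective if and only if the S-module Hom_R(S, M) is Gorenstein injective and Ext^i_R(F, M) = 0 for every flat R-module F and all i ≥ 1. -/
/-!
Let `φ : R → S` be a faithfully flat homomorphism of commutative noetherian rings with
`dim S < ∞`. An `R`-module `M` is Gorenstein injective if and only if the `S`-module
`Hom_R(S, M)` (with `S`-action `(s • f) t = f (s * t)`) is Gorenstein injective and
`Ext^i_R(F, M) = 0` for every flat `R`-module `F` and all `i ≥ 1`.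
-/

universe u

open CategoryTheory

/-- A witness that `J` is a Gorenstein injective `R`-module: an exact complex `I` of
injective `R`-modules (with differentials `d i : I (i+1) →ₗ[R] I i`) such that
`Hom_R(E, I)` is exact for every injective `R`-module `E`, together with an
isomorphism `J ≅ ker (I 0 → I (-1))`. -/
structure GorensteinInjectiveWitness (R : Type u) [CommRing R]
    (J : Type u) [AddCommGroup J] [Module R J] : Type (u + 1) where
  I : ℤ → Type u
  [acg : ∀ i, AddCommGroup (I i)]
  [mod : ∀ i, Module R (I i)]
  inj : ∀ i, Module.Injective R (I i)
  d : ∀ i : ℤ, I (i + 1) →ₗ[R] I i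
  d_comp_d : ∀ i : ℤ, (d i).comp (d (i + 1)) = 0
  exact : ∀ i : ℤ, LinearMap.ker (d i) = LinearMap.range (d (i + 1))
  hom_exact : ∀ (E : Type u) [AddCommGroup E] [Module R E], Module.Injective R E →
    ∀ (i : ℤ) (f : E →ₗ[R] I (i + 1)), (d i).comp f = 0 →
      ∃ g : E →ₗ[R] I (i + 1 + 1), (d (i + 1)).comp g = f
  ker_iso : Nonempty (J ≃ₗ[R] LinearMap.ker (d (-1)))

/-- `J` is a Gorenstein injective `R`-module. -/
def IsGorensteinInjective (R : Type u) [CommRing R]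
    (J : Type u) [AddCommGroup J] [Module R J] : Prop :=
  Nonempty (GorensteinInjectiveWitness R J)

section HomModule

variable (R S : Type u) [CommRing R] [CommRing S] [Algebra R S]
variable (E : Type u) [AddCommGroup E] [Module R E]

/-- The scalar action of `S` on `Hom_R(S, E)` given by `(s • f) t = f (s * t)`. -/
noncomputable instance homSMul : SMul S (S →ₗ[R] E) :=
  ⟨fun s f => f.comp (LinearMap.mulLeft R s)⟩

lemma homSMul_apply (s : S) (f : S →ₗ[R] E) (t : S) : (s • f) t = f (s * t) := rfl

/-- The `S`-module structure on `Hom_R(S, E)` given by `(s • f) t = f (s * t)`. -/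
noncomputable instance homModule : Module S (S →ₗ[R] E) where
  one_smul f := LinearMap.ext fun t => by rw [homSMul_apply, one_mul]
  mul_smul s s' f := LinearMap.ext fun t => by
    rw [homSMul_apply, homSMul_apply, homSMul_apply, mul_assoc, mul_left_comm]
  smul_zero s := LinearMap.ext fun t => by rw [homSMul_apply]; rfl
  smul_add s f g := LinearMap.ext fun t => by
    rw [homSMul_apply, LinearMap.add_apply, LinearMap.add_apply, homSMul_apply, homSMul_apply]
  add_smul s s' f := LinearMap.ext fun t => by
    rw [homSMul_apply, LinearMap.add_apply, homSMul_apply, homSMul_apply, add_mul, map_add]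
  zero_smul f := LinearMap.ext fun t => by
    rw [homSMul_apply, zero_mul, map_zero]; rfl

end HomModule

attribute [local instance] HasDerivedCategory.standard
attribute [local instance] CategoryTheory.hasExt_of_hasDerivedCategory

set_option synthInstance.maxHeartbeats 1000000
set_option maxHeartbeats 1000000

namespace GIX

section Basic

variable {R : Type u} [CommRing R]

/-- A short exact sequence of modules. -/
def SES {K E M : Type u} [AddCommGroup K] [AddCommGroup E] [AddCommGroup M]
    [Module R K] [Module R E] [Module R M] (a : K →ₗ[R] E) (b : E →ₗ[R] M) : Prop :=
  Function.Injective a ∧ Function.Exact a b ∧ Function.Surjective b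

variable {A B F K E M N V : Type u}
  [AddCommGroup A] [AddCommGroup B] [AddCommGroup F] [AddCommGroup K] [AddCommGroup E]
  [AddCommGroup M] [AddCommGroup N] [AddCommGroup V]
  [Module R A] [Module R B] [Module R F] [Module R K] [Module R E]
  [Module R M] [Module R N] [Module R V]

lemma descend {b : E →ₗ[R] M} (hb : Function.Surjective b) (f : E →ₗ[R] N)
    (h : ∀ x, b x = 0 → f x = 0) : ∃ g : M →ₗ[R] N, g ∘ₗ b = f := by
  refine ⟨(LinearMap.ker b).liftQ f h ∘ₗ
    (LinearMap.quotKerEquivOfSurjective b hb).symm.toLinearMap, ?_⟩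
  ext x
  have : (LinearMap.quotKerEquivOfSurjective b hb).symm (b x) = Submodule.Quotient.mk x := by
    rw [LinearEquiv.symm_apply_eq]; rfl
  simp only [LinearMap.comp_apply, LinearEquiv.coe_coe, this]
  exact Submodule.liftQ_apply _ f x

lemma factor {a : K →ₗ[R] E} {b : E →ₗ[R] M} (ha : Function.Injective a)
    (hab : Function.Exact a b) (f : V →ₗ[R] E) (h : ∀ x, b (f x) = 0) :
    ∃ g : V →ₗ[R] K, a ∘ₗ g = f := by
  refine ⟨(LinearEquiv.ofInjective a ha).symm.toLinearMap ∘ₗ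
    f.codRestrict (LinearMap.range a) (fun x => (hab _).1 (h x)), ?_⟩
  ext x
  have := LinearEquiv.apply_symm_apply (LinearEquiv.ofInjective a ha)
    (f.codRestrict (LinearMap.range a) (fun x => (hab _).1 (h x)) x)
  exact congrArg Subtype.val this

lemma ses_ker {b : E →ₗ[R] M} (hb : Function.Surjective b) :
    SES (LinearMap.ker b).subtype b :=
  ⟨Subtype.val_injective, LinearMap.exact_subtype_ker_map b, hb⟩

lemma ses_quot {a : K →ₗ[R] E} (ha : Function.Injective a) :
    SES a (LinearMap.range a).mkQ :=
  ⟨ha, LinearMap.exact_map_mkQ_range a, Submodule.mkQ_surjective _⟩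

lemma inj_ext (hE : Module.Injective R E) {i : A →ₗ[R] B} (hi : Function.Injective i)
    (f : A →ₗ[R] E) : ∃ g : B →ₗ[R] E, g ∘ₗ i = f := by
  obtain ⟨g, hg⟩ := hE.out i hi f
  exact ⟨g, LinearMap.ext hg⟩

lemma inj_retract (hE : Module.Injective R E) (i : M →ₗ[R] E) (r : E →ₗ[R] M)
    (h : ∀ x, r (i x) = x) : Module.Injective R M := by
  constructor
  intro X Y _ _ _ _ f hf g
  obtain ⟨k, hk⟩ := hE.out f hf (i ∘ₗ g)
  exact ⟨r ∘ₗ k, fun x => by simp [hk, h]⟩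

lemma inj_equiv (hE : Module.Injective R E) (e : M ≃ₗ[R] E) : Module.Injective R M :=
  inj_retract hE e.toLinearMap e.symm.toLinearMap (by simp)

lemma inj_prod (hE : Module.Injective R E) (hM : Module.Injective R M) :
    Module.Injective R (E × M) := by
  constructor
  intro X Y _ _ _ _ f hf g
  obtain ⟨k, hk⟩ := hE.out f hf (LinearMap.fst R E M ∘ₗ g)
  obtain ⟨l, hl⟩ := hM.out f hf (LinearMap.snd R E M ∘ₗ g)
  exact ⟨k.prod l, fun x => by ext <;> simp [hk, hl]⟩

/-- quotient of injective by injective is injective, and is a retract. -/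
lemma ses_split_of_injective {a : K →ₗ[R] E} {b : E →ₗ[R] M} (h : SES a b)
    (hK : Module.Injective R K) : ∃ s : M →ₗ[R] E, ∀ x, b (s x) = x := by
  obtain ⟨r, hr⟩ := inj_ext hK h.1 LinearMap.id
  obtain ⟨s, hs⟩ := descend h.2.2 (LinearMap.id - a ∘ₗ r) (by
    intro x hx
    obtain ⟨k, rfl⟩ := (h.2.1 x).1 hx
    have := LinearMap.congr_fun hr k
    simp at this
    simp [this])
  refine ⟨s, fun x => ?_⟩
  obtain ⟨y, rfl⟩ := h.2.2 x
  have := LinearMap.congr_fun hs y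
  simp at this
  rw [this]
  simp [h.2.1.apply_apply_eq_zero]

lemma inj_of_ses {a : K →ₗ[R] E} {b : E →ₗ[R] M} (h : SES a b)
    (hK : Module.Injective R K) (hE : Module.Injective R E) : Module.Injective R M := by
  obtain ⟨s, hs⟩ := ses_split_of_injective h hK
  exact inj_retract hE s b hs

lemma exists_inj (R : Type u) [CommRing R] (M : Type u) [AddCommGroup M] [Module R M] :
    ∃ (E : Type u) (_ : AddCommGroup E) (_ : Module R E) (a : M →ₗ[R] E),
      Module.Injective R E ∧ Function.Injective a := by
  obtain ⟨⟨J, hJ, f, hf⟩⟩ := EnoughInjectives.presentation (ModuleCat.of R M)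
  refine ⟨J, inferInstance, inferInstance, f.hom, ?_, (ModuleCat.mono_iff_injective f).1 hf⟩
  exact (Module.injective_iff_injective_object R J).2 hJ

/-- the dual sequence -/
lemma ses_dual {a : K →ₗ[R] E} {b : E →ₗ[R] M} (h : SES a b) :
    SES (CharacterModule.dual b) (CharacterModule.dual a) := by
  refine ⟨CharacterModule.dual_injective_of_surjective b h.2.2, ?_,
    CharacterModule.dual_surjective_of_injective a h.1⟩
  intro c
  constructor
  · intro hc
    have hc' : ∀ x, b x = 0 → c x = 0 := by
      intro x hx
      obtain ⟨k, rfl⟩ := (h.2.1 x).1 hx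
      exact DFunLike.congr_fun hc k
    refine ⟨⟨⟨fun m => c (Function.surjInv h.2.2 m), ?_⟩, ?_⟩, ?_⟩
    · exact hc' _ (Function.surjInv_eq h.2.2 0)
    · intro x y
      change c _ = c _ + c _
      rw [← map_add, ← sub_eq_zero, ← map_sub]
      apply hc'
      simp [Function.surjInv_eq h.2.2]
    · apply DFunLike.ext
      intro x
      change c (Function.surjInv h.2.2 (b x)) = c x
      rw [← sub_eq_zero, ← map_sub]
      apply hc'
      simp [Function.surjInv_eq h.2.2]
  · rintro ⟨m, rfl⟩
    apply DFunLike.ext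
    intro x
    change m (b (a x)) = 0
    rw [h.2.1.apply_apply_eq_zero, map_zero]

lemma flat_of_ses {a : K →ₗ[R] E} {b : E →ₗ[R] M} (h : SES a b)
    (hE : Module.Flat R E) (hM : Module.Flat R M) : Module.Flat R K := by
  rw [Module.Flat.iff_characterModule_injective] at *
  exact inj_of_ses (ses_dual h) hM hE

/-- Cotorsion, in extension form. -/
def Cot (R : Type u) [CommRing R] (M : Type u) [AddCommGroup M] [Module R M] : Prop :=
  ∀ (A B F : Type u) [AddCommGroup A] [AddCommGroup B] [AddCommGroup F]
    [Module R A] [Module R B] [Module R F] (i : A →ₗ[R] B) (p : B →ₗ[R] F),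
    SES i p → Module.Flat R F → ∀ f : A →ₗ[R] M, ∃ g : B →ₗ[R] M, g ∘ₗ i = f

lemma Cot.lift (hK : Cot R K) {a : K →ₗ[R] E} {b : E →ₗ[R] M} (h : SES a b)
    (hF : Module.Flat R F) (f : F →ₗ[R] M) : ∃ g : F →ₗ[R] E, b ∘ₗ g = f := by
  let X : Submodule R (E × F) := LinearMap.ker (b ∘ₗ LinearMap.fst R E F - f ∘ₗ LinearMap.snd R E F)
  have hX : ∀ x : X, b x.1.1 = f x.1.2 := by
    intro x
    have := LinearMap.mem_ker.1 x.2
    exact sub_eq_zero.1 this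
  let p : X →ₗ[R] F := LinearMap.snd R E F ∘ₗ X.subtype
  let i : K →ₗ[R] X := LinearMap.codRestrict X (a.prod 0) (by
    intro x
    simp [X, h.2.1.apply_apply_eq_zero])
  have hs : SES i p := by
    refine ⟨?_, ?_, ?_⟩
    · intro x y hxy
      apply h.1
      have := congrArg (fun z : X => z.1.1) hxy
      simpa [i] using this
    · intro x
      constructor
      · intro hx
        have hx' : x.1.2 = 0 := hx
        have h1 := hX x
        rw [hx', map_zero] at h1
        obtain ⟨k, hk⟩ := (h.2.1 _).1 h1
        refine ⟨k, Subtype.ext (Prod.ext ?_ ?_)⟩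
        · simpa [i] using hk
        · simp [i, hx']
      · rintro ⟨k, rfl⟩
        simp [i, p]
    · intro y
      obtain ⟨e, he⟩ := h.2.2 (f y)
      exact ⟨⟨(e, y), by simp [X, he]⟩, rfl⟩
  obtain ⟨r, hr⟩ := hK _ _ _ i p hs hF LinearMap.id
  obtain ⟨g, hg⟩ := descend hs.2.2 (LinearMap.fst R E F ∘ₗ X.subtype - a ∘ₗ r) (by
    intro x hx
    obtain ⟨k, rfl⟩ := (hs.2.1 x).1 hx
    have := LinearMap.congr_fun hr k
    simp at this
    simp [this, i])
  refine ⟨g, ?_⟩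
  ext y
  obtain ⟨x, rfl⟩ := hs.2.2 y
  have := LinearMap.congr_fun hg x
  simp only [LinearMap.comp_apply] at this
  rw [LinearMap.comp_apply, this]
  simp [h.2.1.apply_apply_eq_zero, hX, p]

lemma cot_of_lift {a : K →ₗ[R] E} {b : E →ₗ[R] M} (h : SES a b) (hE : Module.Injective R E)
    (H : ∀ (F : Type u) [AddCommGroup F] [Module R F], Module.Flat R F →
      ∀ f : F →ₗ[R] M, ∃ g : F →ₗ[R] E, b ∘ₗ g = f) : Cot R K := by
  intro A B F _ _ _ _ _ _ i p hs hF f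
  obtain ⟨k, hk⟩ := inj_ext hE hs.1 (a ∘ₗ f)
  obtain ⟨l, hl⟩ := descend hs.2.2 (b ∘ₗ k) (by
    intro x hx
    obtain ⟨y, rfl⟩ := (hs.2.1 x).1 hx
    have := LinearMap.congr_fun hk y
    simp at this
    simp [this, h.2.1.apply_apply_eq_zero])
  obtain ⟨m, hm⟩ := H F hF l
  obtain ⟨g, hg⟩ := factor h.1 h.2.1 (k - m ∘ₗ p) (by
    intro x
    have h1 := LinearMap.congr_fun hl x
    have h2 := LinearMap.congr_fun hm (p x)
    simp at h1 h2
    simp [h1, h2])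
  refine ⟨g, ?_⟩
  ext x
  apply h.1
  have h1 := LinearMap.congr_fun hg (i x)
  have h2 := LinearMap.congr_fun hk x
  simp at h1 h2
  simp [h1, h2, hs.2.1.apply_apply_eq_zero]

lemma exists_free (R : Type u) [CommRing R] (M : Type u) [AddCommGroup M] [Module R M] :
    Function.Surjective (Finsupp.linearCombination R (id : M → M)) := by
  intro m
  exact ⟨Finsupp.single m 1, by simp⟩

lemma exists_ker {b : E →ₗ[R] M} (hb : Function.Surjective b) :
    ∃ (K : Type u) (_ : AddCommGroup K) (_ : Module R K) (a : K →ₗ[R] E), SES a b :=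
  ⟨LinearMap.ker b, inferInstance, inferInstance, _, ses_ker hb⟩

lemma exists_coker {a : K →ₗ[R] E} (ha : Function.Injective a) :
    ∃ (M : Type u) (_ : AddCommGroup M) (_ : Module R M) (b : E →ₗ[R] M), SES a b :=
  ⟨E ⧸ LinearMap.range a, inferInstance, inferInstance, _, ses_quot ha⟩

lemma exists_free_cover (R : Type u) [CommRing R] (M : Type u) [AddCommGroup M] [Module R M] :
    ∃ (K : Type u) (_ : AddCommGroup K) (_ : Module R K) (a : K →ₗ[R] (M →₀ R))
      (b : (M →₀ R) →ₗ[R] M), SES a b := by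
  obtain ⟨K, i1, i2, a, h⟩ := exists_ker (exists_free R M)
  exact ⟨K, i1, i2, a, _, h⟩

/-- cosyzygies of cotorsion modules are cotorsion -/
lemma Cot.cosyzygy (hK : Cot R K) {a : K →ₗ[R] E} {b : E →ₗ[R] M} (h : SES a b)
    (hE : Module.Injective R E) : Cot R M := by
  intro A B F _ _ _ _ _ _ i p hs hF f
  obtain ⟨_, _, _, _, q, hq'⟩ := exists_free_cover R B
  have hq := hq'.2.2
  have hpq : Function.Surjective (p ∘ₗ q) := hs.2.2.comp hq
  obtain ⟨Q, _, _, j, hs'⟩ := exists_ker hpq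
  have hfl : Module.Flat R Q := flat_of_ses hs' inferInstance hF
  obtain ⟨t, ht⟩ := factor hs.1 hs.2.1 (q ∘ₗ j) (fun x => hs'.2.1.apply_apply_eq_zero x)
  obtain ⟨l, hl⟩ := hK.lift h hfl (f ∘ₗ t)
  obtain ⟨m, hm⟩ := inj_ext hE hs'.1 l
  have key : ∀ x, b (m (j x)) = f (t x) := by
    intro x
    have h1 := LinearMap.congr_fun hm x
    have h2 := LinearMap.congr_fun hl x
    simp at h1 h2
    rw [h1, h2]
  have ht' : ∀ x, i (t x) = q (j x) := LinearMap.congr_fun ht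
  obtain ⟨g, hg⟩ := descend hq (b ∘ₗ m) (by
    intro x hx
    obtain ⟨x, rfl⟩ := (hs'.2.1 x).1 (by simp [hx])
    have h2 : t x = 0 := by
      apply hs.1
      rw [ht', map_zero]; exact hx
    simp [key, h2])
  refine ⟨g, ?_⟩
  ext x
  obtain ⟨y, hy⟩ := hq (i x)
  obtain ⟨y, rfl⟩ := (hs'.2.1 y).1 (by simp [hy, hs.2.1.apply_apply_eq_zero])
  have h1 := key y
  have h2 : t y = x := hs.1 (by rw [ht']; exact hy)
  have h3 := LinearMap.congr_fun hg (j y)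
  simp at h3
  simp [← hy, h3, h1, h2]

end Basic

section GIdef

/-- Maps from injectives lift along `b`. -/
def LiftInj {R : Type u} [CommRing R] {E M : Type u} [AddCommGroup E] [AddCommGroup M]
    [Module R E] [Module R M] (b : E →ₗ[R] M) : Prop :=
  ∀ (V : Type u) [AddCommGroup V] [Module R V], Module.Injective R V →
    ∀ f : V →ₗ[R] M, ∃ g : V →ₗ[R] E, b ∘ₗ g = f

/-- One step of a totally acyclic complex of injectives. -/
def Link {R : Type u} [CommRing R] {K E M : Type u} [AddCommGroup K] [AddCommGroup E]
    [AddCommGroup M] [Module R K] [Module R E] [Module R M]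
    (a : K →ₗ[R] E) (b : E →ₗ[R] M) : Prop :=
  SES a b ∧ Module.Injective R E ∧ LiftInj b

def LeftStep {R : Type u} [CommRing R] (P : ModuleCat.{u} R → Prop)
    (M : Type u) [AddCommGroup M] [Module R M] : Prop :=
  ∃ (K E : Type u) (_ : AddCommGroup K) (_ : AddCommGroup E) (_ : Module R K) (_ : Module R E)
    (a : K →ₗ[R] E) (b : E →ₗ[R] M), Link a b ∧ P (ModuleCat.of R K)

def RightStep {R : Type u} [CommRing R] (P : ModuleCat.{u} R → Prop)
    (M : Type u) [AddCommGroup M] [Module R M] : Prop :=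
  ∃ (E C : Type u) (_ : AddCommGroup E) (_ : AddCommGroup C) (_ : Module R E) (_ : Module R C)
    (a : M →ₗ[R] E) (b : E →ₗ[R] C), Link a b ∧ P (ModuleCat.of R C)

/-- Coinductive form of Gorenstein injectivity. -/
def GI (R : Type u) [CommRing R] (M : Type u) [AddCommGroup M] [Module R M] : Prop :=
  ∃ P : ModuleCat.{u} R → Prop, P (ModuleCat.of R M) ∧
    ∀ N : ModuleCat.{u} R, P N → LeftStep P N ∧ RightStep P N

variable {R : Type u} [CommRing R]

lemma LeftStep.mono {P Q : ModuleCat.{u} R → Prop} (h : ∀ N, P N → Q N)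
    {M : Type u} [AddCommGroup M] [Module R M] (hM : LeftStep P M) : LeftStep Q M := by
  obtain ⟨K, E, _, _, _, _, a, b, hl, hK⟩ := hM
  exact ⟨K, E, _, _, _, _, a, b, hl, h _ hK⟩

lemma RightStep.mono {P Q : ModuleCat.{u} R → Prop} (h : ∀ N, P N → Q N)
    {M : Type u} [AddCommGroup M] [Module R M] (hM : RightStep P M) : RightStep Q M := by
  obtain ⟨K, E, _, _, _, _, a, b, hl, hK⟩ := hM
  exact ⟨K, E, _, _, _, _, a, b, hl, h _ hK⟩

variable {M N : Type u} [AddCommGroup M] [Module R M] [AddCommGroup N] [Module R N]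

lemma GI.left (h : GI R M) : LeftStep (fun N : ModuleCat.{u} R => GI R N) M := by
  obtain ⟨P, hM, hP⟩ := h
  exact (hP _ hM).1.mono (fun N hN => ⟨P, hN, hP⟩)

lemma GI.right (h : GI R M) : RightStep (fun N : ModuleCat.{u} R => GI R N) M := by
  obtain ⟨P, hM, hP⟩ := h
  exact (hP _ hM).2.mono (fun N hN => ⟨P, hN, hP⟩)

lemma LeftStep.equiv {P : ModuleCat.{u} R → Prop} (h : LeftStep P M) (e : M ≃ₗ[R] N) :
    LeftStep P N := by
  obtain ⟨K, E, _, _, _, _, a, b, ⟨hs, hE, hl⟩, hK⟩ := h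
  refine ⟨K, E, _, _, _, _, a, e.toLinearMap ∘ₗ b, ⟨⟨hs.1, ?_, e.surjective.comp hs.2.2⟩, hE, ?_⟩, hK⟩
  · intro x
    simpa using hs.2.1 x
  · intro V _ _ hV f
    obtain ⟨g, hg⟩ := hl V hV (e.symm.toLinearMap ∘ₗ f)
    refine ⟨g, ?_⟩
    ext x
    have := LinearMap.congr_fun hg x
    simp at this
    simp [this]

lemma RightStep.equiv {P : ModuleCat.{u} R → Prop} (h : RightStep P M) (e : M ≃ₗ[R] N) :
    RightStep P N := by
  obtain ⟨E, C, _, _, _, _, a, b, ⟨hs, hE, hl⟩, hK⟩ := h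
  refine ⟨E, C, _, _, _, _, a ∘ₗ e.symm.toLinearMap, b,
    ⟨⟨hs.1.comp e.symm.injective, ?_, hs.2.2⟩, hE, hl⟩, hK⟩
  intro x
  rw [hs.2.1 x]
  constructor
  · rintro ⟨y, rfl⟩
    exact ⟨e y, by simp⟩
  · rintro ⟨y, rfl⟩
    exact ⟨e.symm y, rfl⟩

lemma GI.of_steps (h1 : LeftStep (fun N : ModuleCat.{u} R => GI R N) M)
    (h2 : RightStep (fun N : ModuleCat.{u} R => GI R N) M) : GI R M := by
  refine ⟨fun N => GI R N ∨ N = ModuleCat.of R M, Or.inr rfl, ?_⟩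
  rintro N (hN | rfl)
  · exact ⟨hN.left.mono fun _ => Or.inl, hN.right.mono fun _ => Or.inl⟩
  · exact ⟨h1.mono fun _ => Or.inl, h2.mono fun _ => Or.inl⟩

lemma GI.equiv (h : GI R M) (e : M ≃ₗ[R] N) : GI R N :=
  GI.of_steps (h.left.equiv e) (h.right.equiv e)

/-- a coinduction principle with unbundled equivalences -/
lemma ses_prod_right {K E M U : Type u} [AddCommGroup K] [AddCommGroup E] [AddCommGroup M]
    [Module R K] [Module R E] [Module R M] [AddCommGroup U] [Module R U]
    {a : K →ₗ[R] E} {b : E →ₗ[R] M} (h : SES a b) :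
    SES (LinearMap.inl R E U ∘ₗ a) (b.prodMap (LinearMap.id : U →ₗ[R] U)) := by
  refine ⟨LinearMap.inl_injective.comp h.1, ?_, Function.Surjective.prodMap h.2.2 Function.surjective_id⟩
  rintro ⟨x, y⟩
  simp [Prod.ext_iff, h.2.1 x]
  intro _ _
  exact eq_comm

lemma ses_prod_left {K E M U : Type u} [AddCommGroup K] [AddCommGroup E] [AddCommGroup M]
    [Module R K] [Module R E] [Module R M] [AddCommGroup U] [Module R U]
    {a : K →ₗ[R] E} {b : E →ₗ[R] M} (h : SES a b) :
    SES (a.prodMap (LinearMap.id : U →ₗ[R] U)) (b ∘ₗ LinearMap.fst R E U) := by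
  refine ⟨Function.Injective.prodMap h.1 Function.injective_id, ?_, h.2.2.comp Prod.fst_surjective⟩
  rintro ⟨x, y⟩
  simp [Prod.ext_iff, h.2.1 x]

lemma liftInj_prod_right {E M U : Type u} [AddCommGroup E] [AddCommGroup M]
    [Module R E] [Module R M] [AddCommGroup U] [Module R U]
    {b : E →ₗ[R] M} (h : LiftInj b) : LiftInj (b.prodMap (LinearMap.id : U →ₗ[R] U)) := by
  intro V _ _ hV f
  obtain ⟨g, hg⟩ := h V hV (LinearMap.fst R M U ∘ₗ f)
  refine ⟨g.prod (LinearMap.snd R M U ∘ₗ f), ?_⟩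
  ext x
  · simpa using LinearMap.congr_fun hg x
  · simp

lemma liftInj_prod_left {E M U : Type u} [AddCommGroup E] [AddCommGroup M]
    [Module R E] [Module R M] [AddCommGroup U] [Module R U]
    {b : E →ₗ[R] M} (h : LiftInj b) : LiftInj (b ∘ₗ LinearMap.fst R E U) := by
  intro V _ _ hV f
  obtain ⟨g, hg⟩ := h V hV f
  refine ⟨g.prod 0, ?_⟩
  ext x
  simpa using LinearMap.congr_fun hg x

lemma GI.prod (h : GI R M) (hN : Module.Injective R N) : GI R (M × N) := by
  apply GI.of_steps
  · obtain ⟨K, E, _, _, _, _, a, b, ⟨hs, hE, hl⟩, hK⟩ := h.left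
    exact ⟨K, E × N, _, _, _, _, _, _, ⟨ses_prod_right hs, inj_prod hE hN, liftInj_prod_right hl⟩, hK⟩
  · obtain ⟨E, C, _, _, _, _, a, b, ⟨hs, hE, hl⟩, hK⟩ := h.right
    exact ⟨E × N, C, _, _, _, _, _, _, ⟨ses_prod_left hs, inj_prod hE hN, liftInj_prod_left hl⟩, hK⟩

/-- For Gorenstein injective `M`, any surjection with kernel `M` lifts maps from injectives. -/
lemma GI.liftInj (h : GI R M) {B C : Type u} [AddCommGroup B] [AddCommGroup C]
    [Module R B] [Module R C] {i : M →ₗ[R] B} {p : B →ₗ[R] C} (hs : SES i p) : LiftInj p := by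
  obtain ⟨E, D, _, _, _, _, a, b, ⟨hs', hE, hl⟩, -⟩ := h.right
  intro V _ _ hV f
  obtain ⟨k, hk⟩ := inj_ext hE hs.1 a
  have hk' : ∀ x, k (i x) = a x := LinearMap.congr_fun hk
  obtain ⟨l, hl'⟩ := descend hs.2.2 (b ∘ₗ k) (by
    intro x hx
    obtain ⟨y, rfl⟩ := (hs.2.1 x).1 hx
    simp [hk', hs'.2.1.apply_apply_eq_zero])
  have hl'' : ∀ x, l (p x) = b (k x) := LinearMap.congr_fun hl'
  obtain ⟨m, hm⟩ := hl V hV (l ∘ₗ f)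
  have hm' : ∀ x, b (m x) = l (f x) := LinearMap.congr_fun hm
  -- the pullback description of `B`
  have ex : ∀ v, ∃ x : B, p x = f v ∧ k x = m v := by
    intro v
    obtain ⟨x, hx⟩ := hs.2.2 (f v)
    have : b (m v - k x) = 0 := by rw [map_sub, hm', ← hl'', hx, sub_self]
    obtain ⟨y, hy⟩ := (hs'.2.1 _).1 this
    refine ⟨x + i y, ?_, ?_⟩
    · simp [hx, hs.2.1.apply_apply_eq_zero]
    · simp [hk', hy]
  have uniq : ∀ x y : B, p x = p y → k x = k y → x = y := by
    intro x y h1 h2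
    have : p (x - y) = 0 := by rw [map_sub, h1, sub_self]
    obtain ⟨z, hz⟩ := (hs.2.1 _).1 this
    have h3 : a z = 0 := by rw [← hk', hz, map_sub, h2, sub_self]
    have h4 : z = 0 := hs'.1 (by rw [h3, map_zero])
    rw [h4, map_zero] at hz
    exact (sub_eq_zero.1 hz.symm)
  choose g hg1 hg2 using ex
  refine ⟨⟨⟨g, ?_⟩, ?_⟩, LinearMap.ext hg1⟩
  · intro x y
    apply uniq <;> simp [hg1, hg2]
  · intro r x
    apply uniq <;> simp [hg1, hg2]

end GIdef

section Schanuel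

variable {R : Type u} [CommRing R] {K E M K' E' C C' : Type u}
  [AddCommGroup K] [AddCommGroup E] [AddCommGroup M] [AddCommGroup K'] [AddCommGroup E']
  [AddCommGroup C] [AddCommGroup C']
  [Module R K] [Module R E] [Module R M] [Module R K'] [Module R E'] [Module R C] [Module R C']

lemma schanuel_aux {a : K →ₗ[R] E} {b : E →ₗ[R] M} {b' : E' →ₗ[R] M} (h : SES a b)
    (ψ : E' →ₗ[R] E) (hψ : b ∘ₗ ψ = b') :
    Nonempty ((K × E') ≃ₗ[R]
      LinearMap.ker (b ∘ₗ LinearMap.fst R E E' - b' ∘ₗ LinearMap.snd R E E')) := by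
  have hψ' : ∀ x, b (ψ x) = b' x := LinearMap.congr_fun hψ
  let X := LinearMap.ker (b ∘ₗ LinearMap.fst R E E' - b' ∘ₗ LinearMap.snd R E E')
  let f : (K × E') →ₗ[R] X := LinearMap.codRestrict X
    ((a.coprod ψ).prod (LinearMap.snd R K E')) (by
      rintro ⟨x, y⟩
      simp [X, hψ', h.2.1.apply_apply_eq_zero])
  refine ⟨LinearEquiv.ofBijective f ⟨?_, ?_⟩⟩
  · rintro ⟨x, y⟩ ⟨x', y'⟩ hxy
    have h1 := congrArg (fun z : X => z.1.1) hxy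
    have h2 := congrArg (fun z : X => z.1.2) hxy
    simp [f] at h1 h2
    subst h2
    simp at h1
    rw [h.1 h1]
  · rintro ⟨⟨e, e'⟩, hx⟩
    have hx' : b e = b' e' := sub_eq_zero.1 (LinearMap.mem_ker.1 hx)
    obtain ⟨k, hk⟩ := (h.2.1 (e - ψ e')).1 (by simp [hψ', hx'])
    exact ⟨(k, e'), Subtype.ext (Prod.ext (by simp [f, hk]) rfl)⟩

lemma schanuel_left {a : K →ₗ[R] E} {b : E →ₗ[R] M} {a' : K' →ₗ[R] E'} {b' : E' →ₗ[R] M}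
    (h : Link a b) (h' : Link a' b') : Nonempty ((K × E') ≃ₗ[R] (K' × E)) := by
  obtain ⟨ψ, hψ⟩ := h.2.2 E' h'.2.1 b'
  obtain ⟨φ, hφ⟩ := h'.2.2 E h.2.1 b
  obtain ⟨e1⟩ := schanuel_aux h.1 ψ hψ
  obtain ⟨e2⟩ := schanuel_aux h'.1 φ hφ
  let sw := LinearEquiv.prodComm R E E'
  have hsw : (LinearMap.ker (b ∘ₗ LinearMap.fst R E E' - b' ∘ₗ LinearMap.snd R E E')).map
      sw.toLinearMap =
      LinearMap.ker (b' ∘ₗ LinearMap.fst R E' E - b ∘ₗ LinearMap.snd R E' E) := by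
    ext ⟨x, y⟩
    simp only [Submodule.mem_map_equiv, LinearMap.mem_ker, LinearMap.sub_apply,
      LinearMap.comp_apply, sub_eq_zero]
    exact eq_comm
  exact ⟨e1.trans ((sw.ofSubmodules _ _ hsw).trans e2.symm)⟩

lemma schanuel_right {a : M →ₗ[R] E} {b : E →ₗ[R] C} {a' : M →ₗ[R] E'} {b' : E' →ₗ[R] C'}
    (h : SES a b) (hE : Module.Injective R E) (h' : SES a' b') (hE' : Module.Injective R E') :
    Nonempty ((C × E') ≃ₗ[R] (C' × E)) := by
  obtain ⟨φ, hφ⟩ := inj_ext hE' h.1 a'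
  obtain ⟨ψ, hψ⟩ := inj_ext hE h'.1 a
  have hφ' : ∀ x, φ (a x) = a' x := LinearMap.congr_fun hφ
  have hψ' : ∀ x, ψ (a' x) = a x := LinearMap.congr_fun hψ
  let f : (E × E') →ₗ[R] (C × E') :=
    (b ∘ₗ LinearMap.fst R E E').prod (φ.coprod LinearMap.id)
  let g : (E × E') →ₗ[R] (C' × E) :=
    (b' ∘ₗ LinearMap.snd R E E').prod (LinearMap.id.coprod ψ)
  have hf : Function.Surjective f := by
    rintro ⟨c, e'⟩
    obtain ⟨e, rfl⟩ := h.2.2 c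
    exact ⟨(e, e' - φ e), by simp [f]⟩
  have hg : Function.Surjective g := by
    rintro ⟨c, e⟩
    obtain ⟨e', rfl⟩ := h'.2.2 c
    exact ⟨(e - ψ e', e'), by simp [g]⟩
  have hk : LinearMap.ker f = LinearMap.ker g := by
    ext ⟨e, e'⟩
    change (b e, φ e + e') = 0 ↔ (b' e', e + ψ e') = 0
    rw [Prod.mk_eq_zero, Prod.mk_eq_zero]
    constructor
    · rintro ⟨h1, h2⟩
      obtain ⟨m, rfl⟩ := (h.2.1 _).1 h1
      rw [hφ'] at h2
      have : e' = - a' m := by rw [eq_neg_iff_add_eq_zero, add_comm]; exact h2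
      subst this
      simp [hψ', h'.2.1.apply_apply_eq_zero]
    · rintro ⟨h1, h2⟩
      obtain ⟨m, rfl⟩ := (h'.2.1 _).1 h1
      rw [hψ'] at h2
      have : e = - a m := by rw [eq_neg_iff_add_eq_zero]; exact h2
      subst this
      simp [hφ', h.2.1.apply_apply_eq_zero]
  exact ⟨(f.quotKerEquivOfSurjective hf).symm.trans
    ((Submodule.quotEquivOfEq _ _ hk).trans (g.quotKerEquivOfSurjective hg))⟩

end Schanuel

section Assemble

variable {R : Type u} [CommRing R] {M : Type u} [AddCommGroup M] [Module R M]

lemma GI.of_witness (w : GorensteinInjectiveWitness R M) : GI R M := by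
  letI := w.acg
  letI := w.mod
  have stepSES : ∀ n : ℤ, ∃ b : w.I (n + 1 + 1) →ₗ[R] LinearMap.ker (w.d n),
      Link (LinearMap.ker (w.d (n + 1))).subtype b := by
    intro n
    refine ⟨LinearMap.codRestrict _ (w.d (n + 1)) (fun x => ?_), ⟨?_, ?_, ?_⟩, w.inj _, ?_⟩
    · exact LinearMap.congr_fun (w.d_comp_d n) x
    · exact Subtype.val_injective
    · intro x
      constructor
      · intro hx
        exact ⟨⟨x, congrArg Subtype.val hx⟩, rfl⟩
      · rintro ⟨y, rfl⟩
        exact Subtype.ext y.2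
    · rintro ⟨x, hx⟩
      rw [w.exact n] at hx
      obtain ⟨y, rfl⟩ := hx
      exact ⟨y, rfl⟩
    · intro V _ _ hV f
      obtain ⟨g, hg⟩ := w.hom_exact V hV n ((LinearMap.ker (w.d n)).subtype ∘ₗ f) (by
        ext x
        exact (f x).2)
      exact ⟨g, LinearMap.ext fun x => Subtype.ext (LinearMap.congr_fun hg x)⟩
  refine ⟨fun N => ∃ n : ℤ, Nonempty (N ≃ₗ[R] LinearMap.ker (w.d n)), ⟨-1, w.ker_iso⟩, ?_⟩
  rintro N ⟨n, ⟨e⟩⟩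
  constructor
  · obtain ⟨b, hb⟩ := stepSES n
    refine LeftStep.equiv (M := LinearMap.ker (w.d n)) ?_ e.symm
    exact ⟨_, _, _, _, _, _, _, b, hb, n + 1, ⟨LinearEquiv.refl _ _⟩⟩
  · obtain ⟨m, rfl⟩ : ∃ m : ℤ, n = m + 1 := ⟨n - 1, by ring⟩
    obtain ⟨b, hb⟩ := stepSES m
    refine RightStep.equiv (M := LinearMap.ker (w.d (m + 1))) ?_ e.symm
    exact ⟨_, _, _, _, _, _, _, b, hb, m, ⟨LinearEquiv.refl _ _⟩⟩

lemma GI.to_isGI (h : GI R M) : IsGorensteinInjective R M := by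
  let X := {N : ModuleCat.{u} R // GI R N}
  let Lk (A C : X) : Prop := ∃ (E : ModuleCat.{u} R) (a : A.1 →ₗ[R] E) (b : E →ₗ[R] C.1), Link a b
  have hl : ∀ C : X, ∃ A : X, Lk A C := by
    rintro ⟨C, hC⟩
    obtain ⟨K, E, _, _, _, _, a, b, hab, hK⟩ := hC.left
    exact ⟨⟨ModuleCat.of R K, hK⟩, ModuleCat.of R E, a, b, hab⟩
  have hr : ∀ A : X, ∃ C : X, Lk A C := by
    rintro ⟨C, hC⟩
    obtain ⟨E, K, _, _, _, _, a, b, hab, hK⟩ := hC.right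
    exact ⟨⟨ModuleCat.of R K, hK⟩, ModuleCat.of R E, a, b, hab⟩
  choose l hl using hl
  choose r hr using hr
  let x0 : X := ⟨ModuleCat.of R M, h⟩
  let L : ℕ → X := fun n => l^[n] x0
  let Q : ℕ → X := fun n => r^[n] x0
  have hL : ∀ n, Lk (L (n + 1)) (L n) := by
    intro n
    simp only [L, Function.iterate_succ_apply']
    exact hl _
  have hQ : ∀ n, Lk (Q n) (Q (n + 1)) := by
    intro n
    simp only [Q, Function.iterate_succ_apply']
    exact hr _
  let Z : ℤ → X := fun n => match n with
    | Int.ofNat 0 => Q 1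
    | Int.ofNat (n + 1) => L n
    | Int.negSucc n => Q (n + 2)
  have hZ : ∀ n : ℤ, Lk (Z (n + 1)) (Z n) := by
    intro n
    match n with
    | Int.ofNat 0 => exact hQ 0
    | Int.ofNat (n + 1) => exact hL n
    | Int.negSucc 0 => exact hQ 1
    | Int.negSucc (n + 1) => exact hQ (n + 2)
  choose E a b hab using hZ
  refine ⟨{
    I := fun i => E i
    inj := fun i => (hab i).2.1
    d := fun i => a i ∘ₗ b (i + 1)
    d_comp_d := ?_
    exact := ?_
    hom_exact := ?_
    ker_iso := ?_ }⟩
  · intro i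
    ext x
    simp [(hab (i + 1)).1.2.1.apply_apply_eq_zero]
  · intro i
    ext x
    simp only [LinearMap.mem_ker, LinearMap.mem_range, LinearMap.comp_apply]
    constructor
    · intro hx
      have hx' : b (i + 1) x = 0 := (hab i).1.1 (by rw [hx, map_zero])
      obtain ⟨y, rfl⟩ := ((hab (i + 1)).1.2.1 x).1 hx'
      obtain ⟨z, rfl⟩ := (hab (i + 1 + 1)).1.2.2 y
      exact ⟨z, rfl⟩
    · rintro ⟨y, rfl⟩
      simp [(hab (i + 1)).1.2.1.apply_apply_eq_zero]
  · intro V _ _ hV i f hf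
    obtain ⟨f', hf'⟩ := factor (hab (i + 1)).1.1 (hab (i + 1)).1.2.1 f (fun x => by
      apply (hab i).1.1
      rw [map_zero]
      exact LinearMap.congr_fun hf x)
    obtain ⟨g, hg⟩ := (hab (i + 1 + 1)).2.2 V hV f'
    exact ⟨g, by rw [LinearMap.comp_assoc, hg, hf']⟩
  · let e := LinearEquiv.ofInjective (a (-1 + 1)) (hab (-1 + 1)).1.1
    refine ⟨e.trans (LinearEquiv.ofEq _ _ ?_)⟩
    ext x
    change x ∈ Set.range _ ↔ a (-1) (b (-1 + 1) x) = 0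
    refine ((hab (-1 + 1)).1.2.1 x).symm.trans ?_
    constructor
    · intro hx
      exact (congrArg (a (-1)) hx).trans (map_zero _)
    · intro hx
      exact (hab (-1)).1.1 (hx.trans (map_zero _).symm)

lemma isGI_iff : IsGorensteinInjective R M ↔ GI R M :=
  ⟨fun ⟨w⟩ => GI.of_witness w, fun h => h.to_isGI⟩

end Assemble

section GICot

variable {R : Type u} [CommRing R]

/-- Maps out of `A` lift along quotients of injectives by Gorenstein injectives. -/
def LG (R : Type u) [CommRing R] (A : Type u) [AddCommGroup A] [Module R A] : Prop :=
  ∀ (K E N : Type u) [AddCommGroup K] [AddCommGroup E] [AddCommGroup N]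
    [Module R K] [Module R E] [Module R N] (a : K →ₗ[R] E) (b : E →ₗ[R] N),
    SES a b → Module.Injective R E → GI R K →
    ∀ f : A →ₗ[R] N, ∃ g : A →ₗ[R] E, b ∘ₗ g = f

variable {A B C P : Type u} [AddCommGroup A] [AddCommGroup B] [AddCommGroup C] [AddCommGroup P]
  [Module R A] [Module R B] [Module R C] [Module R P]

lemma LG.extend (hA : LG R A) (hB : LG R B) {i : A →ₗ[R] B} (hi : Function.Injective i)
    {K E N : Type u} [AddCommGroup K] [AddCommGroup E] [AddCommGroup N]
    [Module R K] [Module R E] [Module R N] {a : K →ₗ[R] E} {b : E →ₗ[R] N}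
    (hs : SES a b) (hE : Module.Injective R E) (hK : GI R K)
    (f : B →ₗ[R] N) (g : A →ₗ[R] E) (hg : ∀ x, b (g x) = f (i x)) :
    ∃ h : B →ₗ[R] E, (∀ x, b (h x) = f x) ∧ ∀ x, h (i x) = g x := by
  obtain ⟨h0, hh0⟩ := hB K E N a b hs hE hK f
  have hh0' : ∀ x, b (h0 x) = f x := LinearMap.congr_fun hh0
  obtain ⟨d, hd⟩ := factor hs.1 hs.2.1 (h0 ∘ₗ i - g) (by
    intro x
    simp [hh0', hg])
  have hd' : ∀ x, a (d x) = h0 (i x) - g x := LinearMap.congr_fun hd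
  obtain ⟨K1, E1, _, _, _, _, a1, b1, ⟨hs1, hE1, -⟩, hK1⟩ := hK.left
  obtain ⟨d1, hd1⟩ := hA K1 E1 K a1 b1 hs1 hE1 hK1 d
  have hd1' : ∀ x, b1 (d1 x) = d x := LinearMap.congr_fun hd1
  obtain ⟨d2, hd2⟩ := inj_ext hE1 hi d1
  have hd2' : ∀ x, d2 (i x) = d1 x := LinearMap.congr_fun hd2
  refine ⟨h0 - a ∘ₗ b1 ∘ₗ d2, fun x => ?_, fun x => ?_⟩
  · simp [hh0', hs.2.1.apply_apply_eq_zero]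
  · simp [hd2', hd1', hd']

lemma LG.quot (hA : LG R A) (hB : LG R B) {i : A →ₗ[R] B} {p : B →ₗ[R] C} (h : SES i p) :
    LG R C := by
  intro K E N _ _ _ _ _ _ a b hs hE hK f
  obtain ⟨g, hg1, hg2⟩ := LG.extend hA hB h.1 hs hE hK (f ∘ₗ p) 0 (by
    intro x
    simp [h.2.1.apply_apply_eq_zero])
  obtain ⟨k, hk⟩ := descend h.2.2 g (by
    intro x hx
    obtain ⟨y, rfl⟩ := (h.2.1 x).1 hx
    exact hg2 y)
  refine ⟨k, ?_⟩
  ext x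
  obtain ⟨y, rfl⟩ := h.2.2 x
  have := LinearMap.congr_fun hk y
  simp only [LinearMap.comp_apply] at this
  rw [LinearMap.comp_apply, this, hg1]
  rfl

lemma LG.of_projective [Module.Projective R P] : LG R P := by
  intro K E N _ _ _ _ _ _ a b hs hE hK f
  exact Module.projective_lifting_property b f hs.2.2

lemma LG.equiv (hA : LG R A) (e : A ≃ₗ[R] B) : LG R B := by
  intro K E N _ _ _ _ _ _ a b hs hE hK f
  obtain ⟨g, hg⟩ := hA K E N a b hs hE hK (f ∘ₗ e.toLinearMap)
  refine ⟨g ∘ₗ e.symm.toLinearMap, ?_⟩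
  ext x
  have := LinearMap.congr_fun hg (e.symm x)
  simpa using this

/-- The local splitting property of a family. -/
def LS {ι : Type u} (y : ι → P) : Prop :=
  ∀ s : Finset ι, ∃ (T : Finset ι) (θ : P →ₗ[R] P),
    (∀ x, θ x ∈ Submodule.span R (y '' T)) ∧ ∀ i ∈ s, θ (y i) = y i

lemma LS.single {ι : Type u} {y : ι → P} (h : LS (R := R) y) (x : P)
    (hx : x ∈ Submodule.span R (Set.range y)) :
    ∃ θ : P →ₗ[R] P, (∀ z, θ z ∈ Submodule.span R (Set.range y)) ∧ θ x = x := by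
  obtain ⟨c, rfl⟩ := Finsupp.mem_span_range_iff_exists_finsupp.1 hx
  obtain ⟨T, θ, h1, h2⟩ := h c.support
  refine ⟨θ, fun z => Submodule.span_mono (Set.image_subset_range _ _) (h1 z), ?_⟩
  simp only [Finsupp.sum, map_sum, map_smul]
  exact Finset.sum_congr rfl fun i hi => by rw [h2 i hi]

lemma LS.countable {ι : Type u} [Countable ι] {y : ι → P} (h : LS (R := R) y) (hP : LG R P) :
    LG R (Submodule.span R (Set.range y)) := by
  classical
  set D := Submodule.span R (Set.range y) with hD
  intro K E N _ _ _ _ _ _ a b hs hE hK f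
  obtain ⟨v, hv⟩ : ∃ v : ℕ → P, insert 0 (Set.range y) = Set.range v :=
    ((Set.countable_range y).insert 0).exists_eq_range (Set.insert_nonempty _ _)
  have hvD : ∀ n, v n ∈ D := by
    intro n
    have : v n ∈ insert 0 (Set.range y) := hv ▸ Set.mem_range_self n
    rcases this with h0 | h1
    · rw [h0]; exact D.zero_mem
    · exact Submodule.subset_span h1
  have exΘ : ∀ x : P, ∃ θ : P →ₗ[R] P, (∀ z, θ z ∈ D) ∧ (x ∈ D → θ x = x) := by
    intro x
    by_cases hx : x ∈ D
    · obtain ⟨θ, h1, h2⟩ := h.single x hx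
      exact ⟨θ, h1, fun _ => h2⟩
    · exact ⟨0, fun z => D.zero_mem, fun h => absurd h hx⟩
  choose Θ hΘ1 hΘ2 using exΘ
  let t : ℕ → (P →ₗ[R] P) := fun n => Nat.rec LinearMap.id
    (fun n tn => tn - Θ (tn (v n)) ∘ₗ tn) n
  have t0 : ∀ x, t 0 x = x := fun x => rfl
  have ts : ∀ n x, t (n + 1) x = t n x - Θ (t n (v n)) (t n x) := fun n x => rfl
  have tD : ∀ n x, x ∈ D → t n x ∈ D := by
    intro n x hx
    induction n with
    | zero => exact hx
    | succ n ih => rw [ts]; exact D.sub_mem ih (hΘ1 _ _)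
  have tz : ∀ n m, n < m → t m (v n) = 0 := by
    intro n m hm
    induction m, hm using Nat.le_induction with
    | base => rw [ts, hΘ2 _ (tD _ _ (hvD n)), sub_self]
    | succ m hm ih => rw [ts, ih, map_zero, sub_self]
  have tfin : ∀ x, x ∈ D → ∃ m0, ∀ m, m0 ≤ m → t m x = 0 := by
    intro x hx
    induction hx using Submodule.span_induction with
    | mem x hx =>
      have : x ∈ Set.range v := hv ▸ Set.mem_insert_of_mem 0 hx
      obtain ⟨n, rfl⟩ := this
      exact ⟨n + 1, fun m hm => tz n m hm⟩
    | zero => exact ⟨0, fun m _ => map_zero _⟩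
    | add x y _ _ hx hy =>
      obtain ⟨m1, h1⟩ := hx
      obtain ⟨m2, h2⟩ := hy
      refine ⟨max m1 m2, fun m hm => ?_⟩
      rw [map_add, h1 m (le_trans (le_max_left _ _) hm), h2 m (le_trans (le_max_right _ _) hm),
        add_zero]
    | smul r x _ hx =>
      obtain ⟨m1, h1⟩ := hx
      exact ⟨m1, fun m hm => by rw [map_smul, h1 m hm, smul_zero]⟩
  have exh : ∀ n, ∃ h : P →ₗ[R] E, ∀ x, b (h x) = f ⟨Θ (t n (v n)) x, hΘ1 _ _⟩ := by
    intro n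
    obtain ⟨h, hh⟩ := hP K E N a b hs hE hK
      (f ∘ₗ LinearMap.codRestrict D (Θ (t n (v n))) (hΘ1 _))
    exact ⟨h, LinearMap.congr_fun hh⟩
  choose h hh using exh
  have hsupp : ∀ x : D, ∃ m0, Function.support (fun n => h n (t n x)) ⊆ Finset.range m0 := by
    intro x
    obtain ⟨m0, hm0⟩ := tfin x x.2
    refine ⟨m0, fun n hn => ?_⟩
    by_contra hn'
    apply hn
    simp only [Finset.coe_range, Set.mem_Iio, not_lt] at hn'
    change h n (t n x) = 0
    rw [hm0 n hn', map_zero]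
  have hsf : ∀ x : D, (Function.support (fun n => h n (t n x))).Finite := by
    intro x
    obtain ⟨m0, hm0⟩ := hsupp x
    exact (Finset.finite_toSet _).subset hm0
  let g : D →ₗ[R] E :=
    { toFun := fun x => ∑ᶠ n, h n (t n x)
      map_add' := by
        intro x y
        rw [← finsum_add_distrib (hsf x) (hsf y)]
        simp
      map_smul' := by
        intro r x
        rw [RingHom.id_apply, smul_finsum' r (hsf x)]
        simp }
  refine ⟨g, ?_⟩
  ext x
  change b (∑ᶠ n, h n (t n x)) = f x
  obtain ⟨m1, hm1⟩ := hsupp x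
  obtain ⟨m2, hm2⟩ := tfin x x.2
  have hm : Function.support (fun n => h n (t n x)) ⊆ Finset.range (max m1 m2) := by
    refine hm1.trans ?_
    intro z hz
    simp only [Finset.coe_range, Set.mem_Iio] at hz ⊢
    exact lt_of_lt_of_le hz (le_max_left _ _)
  rw [finsum_eq_sum_of_support_subset _ hm, map_sum]
  have key : ∀ m, ∑ n ∈ Finset.range m, b (h n (t n x)) = f x - f ⟨t m x, tD m x x.2⟩ := by
    intro m
    induction m with
    | zero =>
      rw [Finset.sum_range_zero, eq_comm, sub_eq_zero]
      rfl
    | succ m ih =>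
      rw [Finset.sum_range_succ, ih, hh, sub_add, ← map_sub]
      rfl
  rw [key]
  have : (⟨t (max m1 m2) x, tD _ x x.2⟩ : D) = 0 := Subtype.ext (hm2 _ (le_max_right _ _))
  rw [this, map_zero, sub_zero]

open Cardinal in
lemma closure_exists {ι : Type u} (w : Finset ι → Finset ι) :
    ∃ cl : Set ι → Set ι, (∀ I, I ⊆ cl I) ∧
      (∀ I (s : Finset ι), (s : Set ι) ⊆ cl I → (w s : Set ι) ⊆ cl I) ∧
      (∀ I Z : Set ι, I ⊆ Z → (∀ s : Finset ι, (s : Set ι) ⊆ Z → (w s : Set ι) ⊆ Z) → cl I ⊆ Z) ∧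
      ∀ I : Set ι, #(cl I) ≤ max #I ℵ₀ := by
  classical
  let G : Set ι → Set ι := fun J => J ∪ ⋃ s : Finset J, (w (s.map (Function.Embedding.subtype _)) : Set ι)
  have hG : ∀ J, J ⊆ G J := fun J => Set.subset_union_left
  have hGc : ∀ J, #(G J) ≤ max #J ℵ₀ := by
    intro J
    have hfin : #(Finset J) ≤ max #J ℵ₀ := by
      rcases finite_or_infinite J with hJ | hJ
      · exact (le_of_lt (lt_aleph0_of_finite _)).trans (le_max_right _ _)
      · rw [mk_finset_of_infinite]; exact le_max_left _ _
    refine (mk_union_le _ _).trans ?_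
    refine add_le_of_le (le_max_right _ _) (le_max_left _ _) ?_
    refine (mk_iUnion_le _).trans ?_
    refine (mul_le_mul' hfin (ciSup_le' (a := ℵ₀) fun s => ?_)).trans ?_
    · exact le_of_lt (lt_aleph0_of_finite _)
    · exact mul_le_of_le (le_max_right _ _) le_rfl (le_max_right _ _)
  let it : Set ι → ℕ → Set ι := fun I n => G^[n] I
  have its : ∀ I n, it I (n + 1) = G (it I n) := fun I n => Function.iterate_succ_apply' _ _ _
  have itm : ∀ I, Monotone (it I) := fun I => monotone_nat_of_le_succ fun n => by
    rw [its]; exact hG _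
  refine ⟨fun I => ⋃ n, it I n, fun I => Set.subset_iUnion (it I) 0, ?_, ?_, ?_⟩
  · intro I s hs
    obtain ⟨n, hn⟩ : ∃ n, (s : Set ι) ⊆ it I n :=
      (itm I).directed_le.exists_mem_subset_of_finset_subset_biUnion hs
    refine Set.Subset.trans ?_ (Set.subset_iUnion (it I) (n + 1))
    rw [its]
    refine Set.Subset.trans ?_ Set.subset_union_right
    have : (s.subtype (· ∈ it I n)).map (Function.Embedding.subtype _) = s := by
      rw [Finset.subtype_map_of_mem]
      exact fun x hx => hn hx
    intro x hx
    refine Set.mem_iUnion.2 ⟨s.subtype (· ∈ it I n), ?_⟩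
    rw [this]
    exact hx
  · intro I Z hI hZ
    refine Set.iUnion_subset fun n => ?_
    induction n with
    | zero => exact hI
    | succ n ih =>
      rw [its]
      refine Set.union_subset ih (Set.iUnion_subset fun s => hZ _ ?_)
      intro x hx
      obtain ⟨y, -, rfl⟩ := Finset.mem_map.1 (Finset.mem_coe.1 hx)
      exact ih y.2
  · intro I
    have : ∀ n, #(it I n) ≤ max #I ℵ₀ := by
      intro n
      induction n with
      | zero => exact le_max_left _ _
      | succ n ih =>
        rw [its]
        exact (hGc _).trans (max_le ih (le_max_right _ _))
    have h2 := mk_iUnion_le_lift.{u, 0} (it I)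
    simp only [lift_uzero] at h2
    refine h2.trans ((mul_le_mul' ?_ (ciSup_le' this)).trans
      (mul_le_of_le (le_max_right #I ℵ₀) (le_max_right #I ℵ₀) le_rfl))
    simp

lemma LS.restrict {ι : Type u} {y : ι → P} {w : Finset ι → Finset ι} {θ : Finset ι → P →ₗ[R] P}
    (h1 : ∀ s x, θ s x ∈ Submodule.span R (y '' w s)) (h2 : ∀ s, ∀ i ∈ s, θ s (y i) = y i)
    {J : Set ι} (hJ : ∀ s : Finset ι, (s : Set ι) ⊆ J → (w s : Set ι) ⊆ J) :
    LS (R := R) (fun j : J => y j) := by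
  classical
  intro s
  let s' := s.map (Function.Embedding.subtype _)
  have hs' : (s' : Set ι) ⊆ J := by
    intro x hx
    obtain ⟨z, -, rfl⟩ := Finset.mem_map.1 (Finset.mem_coe.1 hx)
    exact z.2
  refine ⟨(w s').subtype (· ∈ J), θ s', fun x => ?_, fun i hi => ?_⟩
  · refine Submodule.span_mono ?_ (h1 s' x)
    rintro _ ⟨i, hi, rfl⟩
    exact ⟨⟨i, hJ s' hs' hi⟩, by simpa using hi, rfl⟩
  · exact h2 s' i (Finset.mem_map.2 ⟨i, hi, rfl⟩)

open Cardinal in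
lemma LS.lg_aux (hP : LG R P) (κ : Cardinal.{u}) : ∀ {ι : Type u} {y : ι → P}, #ι = κ →
    LS (R := R) y → LG R (Submodule.span R (Set.range y)) := by
  classical
  induction κ using WellFoundedLT.induction with
  | ind κ IH =>
  intro ι y hι hy
  by_cases hκ : κ ≤ ℵ₀
  · have : Countable ι := by rw [← mk_le_aleph0_iff, hι]; exact hκ
    exact hy.countable hP
  replace hκ := not_le.1 hκ
  have hy0 := hy
  choose w θ h1 h2 using hy
  obtain ⟨cl, cl1, cl2, cl3, cl4⟩ := closure_exists w
  have clmono : ∀ {I I' : Set ι}, I ⊆ I' → cl I ⊆ cl I' := fun {I I'} h =>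
    cl3 I (cl I') (h.trans (cl1 _)) (cl2 _)
  let D : Set ι → Submodule R P := fun I => Submodule.span R (y '' cl I)
  have Dmono : ∀ {I I' : Set ι}, I ⊆ I' → D I ≤ D I' := fun h =>
    Submodule.span_mono (Set.image_mono (clmono h))
  have hlg : ∀ I : Set ι, #I < κ → LG R (D I) := by
    intro I hI
    have h4 : #(cl I) < κ := lt_of_le_of_lt (cl4 I) (max_lt hI hκ)
    have h5 := @IH _ h4 (cl I) (fun j => y j) rfl (LS.restrict h1 h2 (cl2 I))
    have h6 : Set.range (fun j : cl I => y j) = y '' cl I := (Set.image_eq_range _ _).symm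
    rw [h6] at h5
    exact h5
  obtain ⟨_, _, hord⟩ := exists_ord_eq_type_lt ι
  set Y := Submodule.span R (Set.range y) with hY
  have DY : ∀ I, D I ≤ Y := fun I => Submodule.span_mono (Set.image_subset_range _ _)
  intro K E N _ _ _ _ _ _ a b hs hE hK f
  let S : Set (Set ι × (P →ₗ.[R] E)) := {p | IsLowerSet p.1 ∧ p.2.domain = D p.1 ∧
    ∀ (x : p.2.domain) (hx : x.1 ∈ Y), b (p.2 x) = f ⟨x.1, hx⟩}
  have start : ∃ p, p ∈ S := by
    obtain ⟨g, hg⟩ := hlg ∅ (lt_of_le_of_lt (by simp) hκ) K E N a b hs hE hK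
      (f ∘ₗ Submodule.inclusion (DY ∅))
    exact ⟨(∅, ⟨D ∅, g⟩), isLowerSet_empty, rfl, fun x hx => LinearMap.congr_fun hg x⟩
  obtain ⟨p0, hp0⟩ := start
  obtain ⟨⟨I, g⟩, -, hmax⟩ := zorn_le_nonempty₀ S (by
    intro c hcS hc p hp
    have hdir : DirectedOn (· ≤ ·) (Prod.snd '' c) := by
      rintro _ ⟨p, hp, rfl⟩ _ ⟨q, hq, rfl⟩
      rcases hc.total hp hq with h | h
      · exact ⟨q.2, ⟨q, hq, rfl⟩, h.2, le_rfl⟩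
      · exact ⟨p.2, ⟨p, hp, rfl⟩, le_rfl, h.2⟩
    have hne : (Prod.snd '' c).Nonempty := ⟨_, p, hp, rfl⟩
    have hdirc : DirectedOn (fun p q => cl p.1 ⊆ cl q.1) c := by
      intro p hp q hq
      rcases hc.total hp hq with h | h
      · exact ⟨q, hq, clmono h.1, subset_rfl⟩
      · exact ⟨p, hp, subset_rfl, clmono h.1⟩
    let J : Set ι := ⋃ q ∈ c, q.1
    have hJ : ∀ q ∈ c, q.1 ⊆ J := fun q hq => Set.subset_biUnion_of_mem (u := Prod.fst) hq
    refine ⟨(J, LinearPMap.sSup _ hdir), ⟨?_, ?_, ?_⟩, ?_⟩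
    · exact isLowerSet_iUnion₂ fun q hq => (hcS hq).1
    · apply le_antisymm
      · intro x hx
        obtain ⟨_, ⟨q, hq, rfl⟩, hxq⟩ := (LinearPMap.mem_domain_sSup_iff hne hdir).1 hx
        rw [(hcS hq).2.1] at hxq
        exact Dmono (hJ q hq) hxq
      · refine Submodule.span_le.2 ?_
        have : cl J ⊆ ⋃ q ∈ c, cl q.1 := by
          refine cl3 _ _ (Set.iUnion₂_mono fun q hq => cl1 _) ?_
          intro s hs
          obtain ⟨q, hq, hsq⟩ := DirectedOn.exists_mem_subset_of_finset_subset_biUnion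
            (f := fun q : Set ι × (P →ₗ.[R] E) => cl q.1) ⟨p, hp⟩ hdirc hs
          exact (cl2 _ _ hsq).trans (Set.subset_biUnion_of_mem (u := fun q : Set ι × (P →ₗ.[R] E) => cl q.1) hq)
        rintro _ ⟨i, hi, rfl⟩
        obtain ⟨q, hq, hiq⟩ := Set.mem_iUnion₂.1 (this hi)
        refine (LinearPMap.mem_domain_sSup_iff hne hdir).2 ⟨q.2, ⟨q, hq, rfl⟩, ?_⟩
        rw [(hcS hq).2.1]
        exact Submodule.subset_span ⟨i, hiq, rfl⟩
    · rintro ⟨x, hx⟩ hxY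
      obtain ⟨_, ⟨q, hq, rfl⟩, hxq⟩ := (LinearPMap.mem_domain_sSup_iff hne hdir).1 hx
      have h5 := LinearPMap.sSup_apply hdir ⟨q, hq, rfl⟩ ⟨x, hxq⟩
      exact (congrArg b h5).trans ((hcS hq).2.2 ⟨x, hxq⟩ hxY)
    · intro q hq
      exact ⟨hJ q hq, LinearPMap.le_sSup hdir ⟨q, hq, rfl⟩⟩) p0 hp0
  obtain ⟨⟨hI, hdom, hg⟩, hmax⟩ := hmax
  dsimp only at hI hdom hg
  by_cases hu : I = Set.univ
  · have hYd : Y ≤ g.domain := by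
      rw [hdom]
      refine Submodule.span_mono ?_
      rintro _ ⟨i, rfl⟩
      exact ⟨i, cl1 I (hu ▸ Set.mem_univ i), rfl⟩
    refine ⟨g.toFun ∘ₗ Submodule.inclusion hYd, ?_⟩
    ext x
    exact hg ⟨x.1, hYd x.2⟩ x.2
  exfalso
  obtain ⟨i0, hi0, hmin⟩ := WellFounded.has_min (wellFounded_lt (α := ι)) Iᶜ
    (Set.nonempty_compl.2 hu)
  have hIeq : I = Set.Iio i0 := by
    ext z
    constructor
    · intro hz
      by_contra hzi
      exact hi0 (hI (not_lt.1 hzi) hz)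
    · intro hz
      by_contra hzi
      exact hmin z hzi hz
  have hcI : #I < κ := by
    rw [hIeq, ← hι]
    exact mk_Iio_lt i0 hord
  let I' : Set ι := insert i0 I
  have hII : I ⊆ I' := Set.subset_insert _ _
  have hcI' : #I' < κ := by
    refine lt_of_le_of_lt mk_insert_le ?_
    exact add_lt_of_lt hκ.le hcI (one_lt_aleph0.trans hκ)
  have hI' : IsLowerSet I' := by
    have : I' = Set.Iic i0 := by rw [← Set.Iio_insert, ← hIeq]
    rw [this]
    exact isLowerSet_Iic _
  let g0 : D I →ₗ[R] E := g.toFun ∘ₗ Submodule.inclusion hdom.ge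
  obtain ⟨h, hh1, hh2⟩ := LG.extend (hlg I hcI) (hlg I' hcI')
    (Submodule.inclusion_injective (Dmono hII)) hs hE hK (f ∘ₗ Submodule.inclusion (DY I')) g0 (by
      intro x
      exact hg ⟨x.1, hdom.ge x.2⟩ (DY I x.2))
  have hle : ((I, g) : Set ι × (P →ₗ.[R] E)) ≤ (I', ⟨D I', h⟩) := by
    refine ⟨hII, ?_, ?_⟩
    · change g.domain ≤ D I'
      rw [hdom]
      exact Dmono hII
    · rintro ⟨x, hx⟩ ⟨x', hx'⟩ hxx
      change x = x' at hxx
      subst hxx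
      exact (hh2 ⟨x, hdom.le hx⟩).symm
  have := hmax (y := (I', ⟨D I', h⟩)) ⟨hI', rfl, fun x hx => hh1 x⟩ hle
  exact hi0 (this.1 (Set.mem_insert _ _))

lemma LS.lg {ι : Type u} {y : ι → P} (h : LS (R := R) y) (hP : LG R P) :
    LG R (Submodule.span R (Set.range y)) := LS.lg_aux hP _ rfl h

lemma LG.of_flat {F : Type u} [AddCommGroup F] [Module R F] [Module.Flat R F] : LG R F := by
  classical
  obtain ⟨K, _, _, a, b, hs⟩ := exists_free_cover R F
  have hLS : LS (R := R) (ι := K) (fun k => a k) := by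
    intro s
    let D : Finset F := s.biUnion (fun k => (a k).support)
    let incl : (D →₀ R) →ₗ[R] (F →₀ R) := Finsupp.lmapDomain R R Subtype.val
    let pr : (F →₀ R) →ₗ[R] (D →₀ R) := Finsupp.lcomapDomain Subtype.val Subtype.val_injective
    have hip : ∀ k ∈ s, incl (pr (a k)) = a k := by
      intro k hk
      refine Finsupp.mapDomain_comapDomain _ Subtype.val_injective _ ?_
      intro z hz
      exact ⟨⟨z, Finset.mem_biUnion.2 ⟨k, hk, hz⟩⟩, rfl⟩
    let f : (s →₀ R) →ₗ[R] (D →₀ R) := Finsupp.linearCombination R (fun k : s => pr (a k))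
    have hf : (b ∘ₗ incl) ∘ₗ f = 0 := by
      ext k
      simp [f, hip k k.2, hs.2.1.apply_apply_eq_zero]
    obtain ⟨n, a', y', h1, h2⟩ := Module.Flat.exists_factorization_of_comp_eq_zero_of_free hf
    obtain ⟨y1, hy1⟩ := Module.projective_lifting_property b y' hs.2.2
    let θ' : (D →₀ R) →ₗ[R] (F →₀ R) := incl - y1 ∘ₗ a'
    have hb : ∀ x, b (θ' x) = 0 := by
      intro x
      have e1 := LinearMap.congr_fun h1 x
      have e2 := LinearMap.congr_fun hy1 (a' x)
      simp only [LinearMap.comp_apply] at e1 e2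
      simp [θ', e1, e2]
    have hk : ∀ d : D, ∃ k, a k = θ' (Finsupp.single d 1) := fun d => (hs.2.1 _).1 (hb _)
    choose k hk using hk
    refine ⟨Finset.univ.image k, θ' ∘ₗ pr, fun x => ?_, fun i hi => ?_⟩
    · have : ∀ z, θ' z ∈ Submodule.span R ((fun k => a k) '' (Finset.univ.image k : Finset K)) := by
        intro z
        induction z using Finsupp.induction_linear with
        | zero => rw [map_zero]; exact Submodule.zero_mem _
        | add x y hx hy => rw [map_add]; exact Submodule.add_mem _ hx hy
        | single d r =>
          have : Finsupp.single d r = r • Finsupp.single d (1 : R) := by simp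
          rw [this, map_smul, ← hk]
          exact Submodule.smul_mem _ _ (Submodule.subset_span ⟨k d, by simp, rfl⟩)
      exact this _
    · have e1 := LinearMap.congr_fun h2 (Finsupp.single ⟨i, hi⟩ 1)
      simp [f] at e1
      simp [θ', hip i hi, e1]
  have h3 := hLS.lg LG.of_projective
  have h4 : Submodule.span R (Set.range (fun k => a k)) = LinearMap.range a := by
    rw [show (fun k => a k) = a from rfl, ← LinearMap.coe_range, Submodule.span_eq]
  rw [h4] at h3
  exact LG.quot (h3.equiv (LinearEquiv.ofInjective a hs.1).symm) LG.of_projective hs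

lemma GI.cot {M : Type u} [AddCommGroup M] [Module R M] (h : GI R M) : Cot R M := by
  obtain ⟨E, C, _, _, _, _, a, b, ⟨hs, hE, -⟩, -⟩ := h.right
  refine cot_of_lift hs hE fun F _ _ hF f => ?_
  exact LG.of_flat M E C a b hs hE h f

end GICot

section Change

open TensorProduct

variable {R S : Type u} [CommRing R] [CommRing S] [Algebra R S]
variable {K E M : Type u} [AddCommGroup K] [AddCommGroup E] [AddCommGroup M]
  [Module R K] [Module R E] [Module R M]

instance homTower : IsScalarTower R S (S →ₗ[R] M) := ⟨fun r s f => by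
  ext t
  rw [homSMul_apply, LinearMap.smul_apply, homSMul_apply, smul_mul_assoc, map_smul]⟩

/-- postcomposition -/
def homMap (S : Type u) [CommRing S] [Algebra R S] (b : E →ₗ[R] M) :
    (S →ₗ[R] E) →ₗ[S] (S →ₗ[R] M) where
  toFun f := b ∘ₗ f
  map_add' f g := by ext t; simp
  map_smul' s f := by ext t; rfl

lemma homMap_apply (b : E →ₗ[R] M) (f : S →ₗ[R] E) (s : S) : homMap S b f s = b (f s) := rfl

/-- evaluation at one -/
def ev (S : Type u) [CommRing S] [Algebra R S] (M : Type u) [AddCommGroup M] [Module R M] :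
    (S →ₗ[R] M) →ₗ[R] M where
  toFun f := f 1
  map_add' f g := rfl
  map_smul' r f := rfl

lemma ev_apply (f : S →ₗ[R] M) : ev S M f = f 1 := rfl

lemma ev_smul (s : S) (f : S →ₗ[R] M) : ev S M (s • f) = f s := by
  rw [ev_apply, homSMul_apply, mul_one]

/-- coextension -/
def coext {V : Type u} [AddCommGroup V] [Module R V] [Module S V] [IsScalarTower R S V]
    (f : V →ₗ[R] M) : V →ₗ[S] (S →ₗ[R] M) where
  toFun v :=
    { toFun := fun s => f (s • v)
      map_add' := fun s t => by rw [add_smul, map_add]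
      map_smul' := fun r s => by rw [smul_assoc, map_smul]; rfl }
  map_add' v w := by ext s; simp
  map_smul' s v := by
    ext t
    change f (t • s • v) = f ((s * t) • v)
    rw [mul_comm, mul_smul]

lemma coext_apply {V : Type u} [AddCommGroup V] [Module R V] [Module S V] [IsScalarTower R S V]
    (f : V →ₗ[R] M) (v : V) (s : S) : coext f v s = f (s • v) := rfl

lemma injective_hom (S : Type u) [CommRing S] [Algebra R S]
    (hE : Module.Injective R E) : Module.Injective S (S →ₗ[R] E) := by
  constructor
  intro X Y _ _ _ _ f hf g
  letI : Module R X := Module.compHom X (algebraMap R S)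
  haveI : IsScalarTower R S X := IsScalarTower.of_algebraMap_smul fun _ _ => rfl
  letI : Module R Y := Module.compHom Y (algebraMap R S)
  haveI : IsScalarTower R S Y := IsScalarTower.of_algebraMap_smul fun _ _ => rfl
  obtain ⟨k, hk⟩ := hE.out (f.restrictScalars R) hf (ev S E ∘ₗ g.restrictScalars R)
  refine ⟨coext k, fun x => ?_⟩
  ext s
  rw [coext_apply, ← map_smul]
  refine (hk (s • x)).trans ?_
  simp only [LinearMap.comp_apply, LinearMap.restrictScalars_apply, map_smul, ev_smul]

lemma injective_restrict {U : Type u} [AddCommGroup U] [Module R U] [Module S U]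
    [IsScalarTower R S U] [Module.Flat R S] (hU : Module.Injective S U) :
    Module.Injective R U := by
  constructor
  intro X Y _ _ _ _ f hf g
  obtain ⟨k, hk⟩ := hU.out (f.baseChange S) (Module.Flat.lTensor_preserves_injective_linearMap f hf)
    (g.liftBaseChange S)
  refine ⟨k.restrictScalars R ∘ₗ TensorProduct.mk R S Y 1, fun x => ?_⟩
  have := hk (1 ⊗ₜ x)
  simpa using this

lemma ev_section (S : Type u) [CommRing S] [Algebra R S] [Module.FaithfullyFlat R S]
    {V : Type u} [AddCommGroup V] [Module R V] (hV : Module.Injective R V) :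
    ∃ σ : V →ₗ[R] (S →ₗ[R] V), ∀ v, σ v 1 = v := by
  obtain ⟨ρ, hρ⟩ := inj_ext hV (Module.FaithfullyFlat.tensorProduct_mk_injective (A := R) (B := S) V)
    LinearMap.id
  refine ⟨LinearMap.compRight R ρ ∘ₗ (TensorProduct.mk R S V).flip, fun v => ?_⟩
  exact LinearMap.congr_fun hρ v

lemma inj_of_section {a : K →ₗ[R] E} {b : E →ₗ[R] M} (h : SES a b) (hE : Module.Injective R E)
    (s : M →ₗ[R] E) (hs : ∀ x, b (s x) = x) : Module.Injective R K := by
  obtain ⟨r, hr⟩ := factor h.1 h.2.1 (LinearMap.id - s ∘ₗ b) (by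
    intro x
    simp [hs])
  refine inj_retract hE a r fun x => h.1 ?_
  have := LinearMap.congr_fun hr (a x)
  simpa [h.2.1.apply_apply_eq_zero] using this

lemma exists_flat_coker (S : Type u) [CommRing S] [Algebra R S] [Module.FaithfullyFlat R S]
    {F : Type u} [AddCommGroup F] [Module R F] (hF : Module.Flat R F) :
    ∃ (C : Type u) (_ : AddCommGroup C) (_ : Module R C) (p : S ⊗[R] F →ₗ[R] C),
      SES (TensorProduct.mk R S F 1) p ∧ Module.Flat R C := by
  obtain ⟨C, _, _, p, hs⟩ := exists_coker
    (Module.FaithfullyFlat.tensorProduct_mk_injective (A := R) (B := S) F)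
  refine ⟨C, _, _, p, hs, ?_⟩
  have hF' : Module.Injective R (CharacterModule F) :=
    Module.Flat.iff_characterModule_injective.1 hF
  have hSF : Module.Injective R (CharacterModule (S ⊗[R] F)) :=
    Module.Flat.iff_characterModule_injective.1 inferInstance
  obtain ⟨σ, hσ⟩ := ev_section S hF'
  rw [Module.Flat.iff_characterModule_injective]
  refine inj_of_section (ses_dual hs) hSF (CharacterModule.uncurry ∘ₗ σ) fun c => ?_
  apply DFunLike.ext
  intro x
  exact DFunLike.congr_fun (hσ c) x

lemma cot_ev_lift (S : Type u) [CommRing S] [Algebra R S] [Module.FaithfullyFlat R S]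
    (hM : Cot R M) {F : Type u} [AddCommGroup F] [Module R F] (hF : Module.Flat R F)
    (f : F →ₗ[R] M) : ∃ g : F →ₗ[R] (S →ₗ[R] M), ∀ x, g x 1 = f x := by
  obtain ⟨C, _, _, p, hs, hC⟩ := exists_flat_coker S hF
  obtain ⟨k, hk⟩ := hM _ _ _ _ p hs hC f
  refine ⟨LinearMap.compRight R k ∘ₗ (TensorProduct.mk R S F).flip, fun v => ?_⟩
  exact LinearMap.congr_fun hk v

lemma ses_hom (S : Type u) [CommRing S] [Algebra R S] [Module.Flat R S]
    {a : K →ₗ[R] E} {b : E →ₗ[R] M} (h : SES a b) (hK : Cot R K) :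
    SES (homMap S a) (homMap S b) := by
  refine ⟨fun f g hfg => ?_, fun f => ⟨fun hf => ?_, ?_⟩, fun f => ?_⟩
  · ext s
    exact h.1 (LinearMap.congr_fun hfg s)
  · obtain ⟨g, hg⟩ := factor h.1 h.2.1 f (LinearMap.congr_fun hf)
    exact ⟨g, hg⟩
  · rintro ⟨g, rfl⟩
    ext s
    exact h.2.1.apply_apply_eq_zero _
  · exact hK.lift h inferInstance f

lemma liftInj_hom (S : Type u) [CommRing S] [Algebra R S] [Module.Flat R S]
    {b : E →ₗ[R] M} (h : LiftInj b) : LiftInj (homMap S b) := by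
  intro V _ _ hV f
  letI : Module R V := Module.compHom V (algebraMap R S)
  haveI : IsScalarTower R S V := IsScalarTower.of_algebraMap_smul fun _ _ => rfl
  obtain ⟨g, hg⟩ := h V (injective_restrict hV) (ev S M ∘ₗ f.restrictScalars R)
  refine ⟨coext g, ?_⟩
  ext v s
  have := LinearMap.congr_fun hg (s • v)
  simp only [LinearMap.comp_apply, LinearMap.restrictScalars_apply, map_smul, ev_smul] at this
  exact this

lemma link_hom (S : Type u) [CommRing S] [Algebra R S] [Module.Flat R S]
    {a : K →ₗ[R] E} {b : E →ₗ[R] M} (h : Link a b) (hK : Cot R K) :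
    Link (homMap S a) (homMap S b) :=
  ⟨ses_hom S h.1 hK, injective_hom S h.2.1, liftInj_hom S h.2.2⟩

lemma link_hom_ex (S : Type u) [CommRing S] [Algebra R S] [Module.Flat R S]
    {a : K →ₗ[R] E} {b : E →ₗ[R] M} (h : Link a b) (hK : Cot R K) :
    ∃ (X : Type u) (_ : AddCommGroup X) (_ : Module S X) (a' : (S →ₗ[R] K) →ₗ[S] X)
      (b' : X →ₗ[S] (S →ₗ[R] M)), Link a' b' :=
  ⟨_, _, _, _, _, link_hom S h hK⟩

lemma cot_base_lift [Module.Flat R S] {Z U G F : Type u} [AddCommGroup Z] [AddCommGroup U]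
    [AddCommGroup G] [AddCommGroup F] [Module S Z] [Module S U] [Module S G] [Module R F]
    [Module R U] [Module R G] [IsScalarTower R S U] [IsScalarTower R S G]
    (hZ : Cot S Z) {a : Z →ₗ[S] U} {b : U →ₗ[S] G} (h : SES a b) (hF : Module.Flat R F)
    (f : F →ₗ[R] G) : ∃ g : F →ₗ[R] U, ∀ x, b (g x) = f x := by
  obtain ⟨k, hk⟩ := hZ.lift h (F := S ⊗[R] F) inferInstance (f.liftBaseChange S)
  refine ⟨k.restrictScalars R ∘ₗ TensorProduct.mk R S F 1, fun x => ?_⟩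
  have := LinearMap.congr_fun hk (1 ⊗ₜ x)
  simpa using this

end Change

section ExtPart

variable {R : Type u} [CommRing R]

lemma ses_shortExact {A B C : Type u} [AddCommGroup A] [AddCommGroup B] [AddCommGroup C]
    [Module R A] [Module R B] [Module R C] {a : A →ₗ[R] B} {b : B →ₗ[R] C} (h : SES a b)
    (w : ModuleCat.ofHom a ≫ ModuleCat.ofHom b = 0) :
    (ShortComplex.mk (ModuleCat.ofHom a) (ModuleCat.ofHom b) w).ShortExact where
  exact := (ShortComplex.ShortExact.moduleCat_exact_iff_function_exact _).2 h.2.1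
  mono_f := (ModuleCat.mono_iff_injective _).2 h.1
  epi_g := (ModuleCat.epi_iff_surjective _).2 h.2.2

lemma ses_comp {A B C : Type u} [AddCommGroup A] [AddCommGroup B] [AddCommGroup C]
    [Module R A] [Module R B] [Module R C] {a : A →ₗ[R] B} {b : B →ₗ[R] C} (h : SES a b) :
    ModuleCat.ofHom a ≫ ModuleCat.ofHom b = 0 := by
  ext x
  exact h.2.1.apply_apply_eq_zero x

variable {M : Type u} [AddCommGroup M] [Module R M]

lemma cot_of_ext (H : ∀ (F : Type u) [AddCommGroup F] [Module R F], Module.Flat R F →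
    Subsingleton (Abelian.Ext (ModuleCat.of R F) (ModuleCat.of R M) 1)) : Cot R M := by
  intro A B F _ _ _ _ _ _ i p hs hF f
  have hS := ses_shortExact hs (ses_comp hs)
  have := H F hF
  obtain ⟨x₂, hx₂⟩ := Abelian.Ext.contravariant_sequence_exact₁ hS (ModuleCat.of R M)
    (Abelian.Ext.mk₀ (ModuleCat.ofHom f)) (n₁ := 1) (add_comm 1 0) (Subsingleton.elim _ _)
  obtain ⟨g, rfl⟩ := (Abelian.Ext.mk₀_bijective _ _).2 x₂
  rw [Abelian.Ext.mk₀_comp_mk₀] at hx₂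
  have h2 := (Abelian.Ext.mk₀_bijective _ _).1 hx₂
  exact ⟨g.hom, congrArg ModuleCat.Hom.hom h2⟩

lemma ext_of_cot (hM : Cot R M) (n : ℕ) : ∀ (F : Type u) [AddCommGroup F] [Module R F],
    Module.Flat R F →
    Subsingleton (Abelian.Ext (ModuleCat.of R F) (ModuleCat.of R M) (n + 1)) := by
  induction n with
  | zero =>
    intro F _ _ hF
    obtain ⟨K, _, _, a, b, hs⟩ := exists_free_cover R F
    have hS := ses_shortExact hs (ses_comp hs)
    haveI : Projective (ModuleCat.of R (F →₀ R)) := ModuleCat.projective_of_free (Finsupp.basisSingleOne)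
    refine subsingleton_of_forall_eq 0 fun x => ?_
    obtain ⟨x₁, rfl⟩ := Abelian.Ext.contravariant_sequence_exact₃ hS (ModuleCat.of R M) x
      (Abelian.Ext.eq_zero_of_projective _) (n₀ := 0) (add_comm 1 0)
    obtain ⟨f, rfl⟩ := (Abelian.Ext.mk₀_bijective _ _).2 x₁
    obtain ⟨g, hg⟩ := hM _ _ _ a b hs hF f.hom
    have : f = ModuleCat.ofHom a ≫ ModuleCat.ofHom g := by
      ext x
      exact (LinearMap.congr_fun hg x).symm
    subst this
    rw [← Abelian.Ext.mk₀_comp_mk₀]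
    exact hS.extClass_comp_assoc _
  | succ n ih =>
    intro F _ _ hF
    obtain ⟨K, _, _, a, b, hs⟩ := exists_free_cover R F
    have hK : Module.Flat R K := flat_of_ses hs inferInstance hF
    have hS := ses_shortExact hs (ses_comp hs)
    haveI : Projective (ModuleCat.of R (F →₀ R)) := ModuleCat.projective_of_free (Finsupp.basisSingleOne)
    refine subsingleton_of_forall_eq 0 fun x => ?_
    obtain ⟨x₁, rfl⟩ := Abelian.Ext.contravariant_sequence_exact₃ hS (ModuleCat.of R M) x
      (Abelian.Ext.eq_zero_of_projective _) (n₀ := n + 1) (add_comm 1 (n + 1))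
    have := ih K hK
    rw [show x₁ = 0 from Subsingleton.elim (α := Abelian.Ext (ModuleCat.of R K) _ _) _ _,
      Abelian.Ext.comp_zero]

end ExtPart

section Main

variable {R S : Type u} [CommRing R] [CommRing S] [Algebra R S]

lemma GI.hom [Module.Flat R S] {M : Type u} [AddCommGroup M] [Module R M] (h : GI R M) :
    GI S (S →ₗ[R] M) := by
  refine ⟨fun N => ∃ M' : ModuleCat.{u} R, GI R M' ∧ Nonempty ((S →ₗ[R] M') ≃ₗ[S] N),
    ⟨ModuleCat.of R M, h, ⟨LinearEquiv.refl _ _⟩⟩, ?_⟩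
  rintro N ⟨M', hM', ⟨e⟩⟩
  constructor
  · refine LeftStep.equiv ?_ e
    obtain ⟨K, E, _, _, _, _, a, b, hl, hK⟩ := hM'.left
    exact ⟨_, _, _, _, _, _, _, _, link_hom S hl (GI.cot hK), ModuleCat.of R K, hK,
      ⟨LinearEquiv.refl _ _⟩⟩
  · refine RightStep.equiv ?_ e
    obtain ⟨E, C, _, _, _, _, a, b, hl, hC⟩ := hM'.right
    exact ⟨_, _, _, _, _, _, _, _, link_hom S hl hM'.cot, ModuleCat.of R C, hC,
      ⟨LinearEquiv.refl _ _⟩⟩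

/-- The coinduction predicate. -/
def PP (R S : Type u) [CommRing R] [CommRing S] [Algebra R S]
    (M : Type u) [AddCommGroup M] [Module R M] : Prop :=
  Cot R M ∧ ∃ W : ModuleCat.{u} S, Module.Injective S W ∧ GI S ((S →ₗ[R] M) × W)

variable [Module.FaithfullyFlat R S] {M : Type u} [AddCommGroup M] [Module R M]

lemma PP.leftStep (h : PP R S M) : LeftStep (fun N : ModuleCat.{u} R => PP R S N) M := by
  obtain ⟨hM, W, hW, hG⟩ := h
  obtain ⟨K0, U, _, _, _, _, a, b, hl, hK0⟩ := hG.left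
  have hK0c : Cot S K0 := GI.cot hK0
  letI : Module R U := Module.compHom U (algebraMap R S)
  haveI : IsScalarTower R S U := IsScalarTower.of_algebraMap_smul fun _ _ => rfl
  letI : Module R W := Module.compHom W (algebraMap R S)
  haveI : IsScalarTower R S W := IsScalarTower.of_algebraMap_smul fun _ _ => rfl
  let bM : U →ₗ[R] M := ev S M ∘ₗ (LinearMap.fst S (S →ₗ[R] M) W ∘ₗ b).restrictScalars R
  have hbM : ∀ u, bM u = (b u).1 1 := fun u => rfl
  have hUR : Module.Injective R U := injective_restrict hl.2.1
  have hflat : ∀ (F : Type u) [AddCommGroup F] [Module R F], Module.Flat R F →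
      ∀ f : F →ₗ[R] M, ∃ g : F →ₗ[R] U, bM ∘ₗ g = f := by
    intro F _ _ hF f
    obtain ⟨g, hg⟩ := cot_ev_lift S hM hF f
    obtain ⟨k, hk⟩ := cot_base_lift hK0c hl.1 hF (LinearMap.inl R (S →ₗ[R] M) W ∘ₗ g)
    refine ⟨k, ?_⟩
    ext x
    rw [LinearMap.comp_apply, hbM, hk]
    exact hg x
  have hsurj : Function.Surjective bM := by
    intro m
    obtain ⟨g, hg⟩ := hflat R inferInstance (LinearMap.toSpanSingleton R M m)
    refine ⟨g 1, ?_⟩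
    have := LinearMap.congr_fun hg 1
    simpa using this
  have hlift : LiftInj bM := by
    intro V _ _ hV f
    obtain ⟨σ, hσ⟩ := ev_section S hV
    obtain ⟨k, hk⟩ := hl.2.2 (S →ₗ[R] V) (injective_hom S hV)
      (LinearMap.inl S (S →ₗ[R] M) W ∘ₗ homMap S f)
    refine ⟨k.restrictScalars R ∘ₗ σ, ?_⟩
    ext v
    have h1 := LinearMap.congr_fun hk (σ v)
    have h2 : bM (k (σ v)) = f (σ v 1) := by
      rw [hbM]
      exact LinearMap.congr_fun (congrArg Prod.fst h1) 1
    rw [hσ] at h2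
    exact h2
  obtain ⟨N, _, _, i, hs⟩ := exists_ker hsurj
  have hLink : Link i bM := ⟨hs, hUR, hlift⟩
  have hN : Cot R N := cot_of_lift hs hUR hflat
  obtain ⟨X, _, _, a', b', hl'⟩ := link_hom_ex S hLink hN
  have hl'' : Link (LinearMap.inl S X W ∘ₗ a') (b'.prodMap (LinearMap.id : W →ₗ[S] W)) :=
    ⟨ses_prod_right hl'.1, inj_prod hl'.2.1 hW, liftInj_prod_right hl'.2.2⟩
  obtain ⟨e⟩ := schanuel_left hl hl''
  refine ⟨N, U, _, _, _, _, i, bM, hLink, hN, ModuleCat.of S U, hl.2.1, ?_⟩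
  exact (GI.prod hK0 hl''.2.1).equiv e

lemma PP.rightStep (h : PP R S M) : RightStep (fun N : ModuleCat.{u} R => PP R S N) M := by
  obtain ⟨hM, W, hW, hG⟩ := h
  obtain ⟨I, _, _, a, hI, ha⟩ := exists_inj R M
  obtain ⟨C, _, _, b, hs⟩ := exists_coker ha
  have hC : Cot R C := hM.cosyzygy hs hI
  have hs' := ses_prod_left (U := W) (ses_hom S hs hM)
  have hl' := GI.liftInj hG hs'
  have hIW : Module.Injective S ((S →ₗ[R] I) × W) := inj_prod (injective_hom S hI) hW
  have hlift : LiftInj b := by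
    intro V _ _ hV f
    obtain ⟨σ, hσ⟩ := ev_section S hV
    obtain ⟨k, hk⟩ := hl' (S →ₗ[R] V) (injective_hom S hV) (homMap S f)
    refine ⟨ev S I ∘ₗ (LinearMap.fst S (S →ₗ[R] I) W ∘ₗ k).restrictScalars R ∘ₗ σ, ?_⟩
    ext v
    have h1 := LinearMap.congr_fun hk (σ v)
    have h2 : b ((k (σ v)).1 1) = f (σ v 1) := LinearMap.congr_fun h1 1
    rw [hσ] at h2
    exact h2
  obtain ⟨E', C', _, _, _, _, a', b', hl, hC'⟩ := hG.right
  obtain ⟨e⟩ := schanuel_right hs' hIW hl.1 hl.2.1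
  refine ⟨I, C, _, _, _, _, a, b, ⟨hs, hI, hlift⟩, hC, ModuleCat.of S E', hl.2.1, ?_⟩
  exact (GI.prod hC' hIW).equiv e.symm

lemma PP.gi (h : PP R S M) : GI R M :=
  ⟨fun N => PP R S N, h, fun _ hN => ⟨PP.leftStep hN, PP.rightStep hN⟩⟩

lemma inj_punit : Module.Injective S PUnit.{u + 1} :=
  ⟨fun _ _ _ _ _ _ _ _ _ => ⟨0, fun _ => Subsingleton.elim _ _⟩⟩

lemma gi_iff : GI R M ↔ GI S (S →ₗ[R] M) ∧ Cot R M := by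
  refine ⟨fun h => ⟨h.hom, h.cot⟩, fun h => PP.gi (S := S) ⟨h.2, ModuleCat.of S PUnit.{u + 1}, inj_punit, ?_⟩⟩
  exact h.1.prod inj_punit

end Main

end GIX

theorem isGorensteinInjective_iff_hom_isGorensteinInjective_and_cotorsion
    (R S : Type u) [CommRing R] [CommRing S] [IsNoetherianRing R] [IsNoetherianRing S]
    [Algebra R S] [Module.FaithfullyFlat R S] (hdim : ringKrullDim S < ⊤)
    (M : Type u) [AddCommGroup M] [Module R M] :
    IsGorensteinInjective R M ↔
      (IsGorensteinInjective S (S →ₗ[R] M) ∧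
        ∀ (F : Type u) [AddCommGroup F] [Module R F], Module.Flat R F →
          ∀ i : ℕ, 1 ≤ i →
            Subsingleton (Abelian.Ext (ModuleCat.of R F) (ModuleCat.of R M) i)) := by
  rw [GIX.isGI_iff, GIX.isGI_iff, GIX.gi_iff (S := S)]
  refine and_congr_right fun _ => ⟨fun h F _ _ hF i hi => ?_, fun h => ?_⟩
  · obtain ⟨n, rfl⟩ : ∃ n, i = n + 1 := ⟨i - 1, by omega⟩
    exact GIX.ext_of_cot h n F hF
  · exact GIX.cot_of_ext fun F _ _ hF => h F hF 1 le_rfl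
end

section
/- Let φ : R → S be a faithfully flat homomorphism of commutative noetherian rings. An R-module M is Gorenstein flat if and only if the S-module S ⊗_R M is Gorenstein flat and Tor_i^R(E, M) = 0 for every injective R-module E and all i ≥ 1. -/
/-!
Let `φ : R → S` be a faithfully flat homomorphism of commutative noetherian rings.
An `R`-module `M` is Gorenstein flat if and only if the `S`-module `S ⊗_R M` is
Gorenstein flat and `Tor_i^R(E, M) = 0` for every injective `R`-module `E` and all `i ≥ 1`.
-/

universe u

open CategoryTheory TensorProduct

/-- A witness that `G` is a Gorenstein flat `R`-module: an exact complex `F` of flat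
`R`-modules (with differentials `d i : F (i+1) →ₗ[R] F i`) such that `E ⊗_R F` is exact
for every injective `R`-module `E`, together with an isomorphism `G ≅ im (F 0 → F (-1))`. -/
structure GorensteinFlatWitness (R : Type u) [CommRing R]
    (G : Type u) [AddCommGroup G] [Module R G] : Type (u + 1) where
  F : ℤ → Type u
  [acg : ∀ i, AddCommGroup (F i)]
  [mod : ∀ i, Module R (F i)]
  flat : ∀ i, Module.Flat R (F i)
  d : ∀ i : ℤ, F (i + 1) →ₗ[R] F i
  d_comp_d : ∀ i : ℤ, (d i).comp (d (i + 1)) = 0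
  exact : ∀ i : ℤ, LinearMap.ker (d i) = LinearMap.range (d (i + 1))
  tensor_exact : ∀ (E : Type u) [AddCommGroup E] [Module R E], Module.Injective R E →
    ∀ i : ℤ, LinearMap.ker (LinearMap.lTensor E (d i)) =
      LinearMap.range (LinearMap.lTensor E (d (i + 1)))
  im_iso : Nonempty (G ≃ₗ[R] LinearMap.range (d (-1)))

/-- `G` is a Gorenstein flat `R`-module. -/
def IsGorensteinFlat (R : Type u) [CommRing R]
    (G : Type u) [AddCommGroup G] [Module R G] : Prop :=
  Nonempty (GorensteinFlatWitness R G)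

/-- short exact sequence of modules -/
def SES {R : Type*} [CommRing R] {A B C : Type*} [AddCommGroup A] [Module R A]
    [AddCommGroup B] [Module R B] [AddCommGroup C] [Module R C]
    (f : A →ₗ[R] B) (g : B →ₗ[R] C) : Prop :=
  Function.Injective f ∧ Function.Exact f g ∧ Function.Surjective g

theorem ses_mkQ {R : Type*} [CommRing R] {A B : Type*} [AddCommGroup A] [Module R A]
    [AddCommGroup B] [Module R B] (f : A →ₗ[R] B) (hf : Function.Injective f) :
    SES f (LinearMap.range f).mkQ :=
  ⟨hf, LinearMap.exact_map_mkQ_range f, Submodule.mkQ_surjective _⟩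

theorem ses_subtype {R : Type*} [CommRing R] {B C : Type*}
    [AddCommGroup B] [Module R B] [AddCommGroup C] [Module R C] (g : B →ₗ[R] C)
    (hg : Function.Surjective g) : SES (LinearMap.ker g).subtype g :=
  ⟨Subtype.val_injective, LinearMap.exact_subtype_ker_map g, hg⟩

theorem exists_factor {R : Type*} [CommRing R] {B C D : Type*}
    [AddCommGroup B] [Module R B] [AddCommGroup C] [Module R C] [AddCommGroup D] [Module R D]
    (g : B →ₗ[R] C) (hg : Function.Surjective g) (k : B →ₗ[R] D)
    (h : ∀ x, g x = 0 → k x = 0) : ∃ k' : C →ₗ[R] D, ∀ x, k' (g x) = k x := by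
  refine ⟨((LinearMap.ker g).liftQ k h) ∘ₗ (g.quotKerEquivOfSurjective hg).symm.toLinearMap, ?_⟩
  intro x
  have : (g.quotKerEquivOfSurjective hg).symm (g x) = (LinearMap.ker g).mkQ x := by
    rw [LinearEquiv.symm_apply_eq]; rfl
  rw [LinearMap.comp_apply, LinearEquiv.coe_coe, this]; rfl

section bal
variable {R : Type*} [CommRing R] {A B C L Q E : Type*} [AddCommGroup A] [Module R A]
    [AddCommGroup B] [Module R B] [AddCommGroup C] [Module R C]
    [AddCommGroup L] [Module R L]
    [AddCommGroup Q] [Module R Q] [AddCommGroup E] [Module R E]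

theorem lr_comm (i : L →ₗ[R] Q) (f : A →ₗ[R] B) (x : L ⊗[R] A) :
    (f.lTensor Q) (i.rTensor A x) = i.rTensor B (f.lTensor L x) := by
  rw [← LinearMap.comp_apply, ← LinearMap.comp_apply, LinearMap.lTensor_comp_rTensor,
    LinearMap.rTensor_comp_lTensor]

/-- Q flat -/
theorem bal1 [Module.Flat R Q] {i : L →ₗ[R] Q} {p : Q →ₗ[R] E} (hi : SES i p)
    {f : A →ₗ[R] B} {g : B →ₗ[R] C} (hf : SES f g)
    (h : Function.Injective (i.rTensor C)) : Function.Injective (f.lTensor E) := by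
  rw [injective_iff_map_eq_zero]
  intro z hz
  obtain ⟨z', rfl⟩ := LinearMap.rTensor_surjective A hi.2.2 z
  rw [lr_comm] at hz
  obtain ⟨y, hy⟩ := (rTensor_exact B hi.2.1 hi.2.2 _).1 hz
  have h1 : g.lTensor L y = 0 := by
    apply h
    rw [← lr_comm, hy, map_zero]
    exact (lTensor_exact Q hf.2.1 hf.2.2 _).2 ⟨z', rfl⟩
  obtain ⟨yy, rfl⟩ := (lTensor_exact L hf.2.1 hf.2.2 _).1 h1
  rw [← lr_comm] at hy
  have h2 := Module.Flat.lTensor_preserves_injective_linearMap (M := Q) f hf.1 hy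
  rw [← h2]
  exact (rTensor_exact A hi.2.1 hi.2.2 _).2 ⟨yy, rfl⟩

/-- B flat -/
theorem bal2 [Module.Flat R B] {i : L →ₗ[R] Q} {p : Q →ₗ[R] E} (hi : SES i p)
    {f : A →ₗ[R] B} {g : B →ₗ[R] C} (hf : SES f g)
    (h : Function.Injective (f.lTensor E)) : Function.Injective (i.rTensor C) := by
  rw [injective_iff_map_eq_zero]
  intro z hz
  obtain ⟨z', rfl⟩ := LinearMap.lTensor_surjective L hf.2.2 z
  rw [← lr_comm] at hz
  obtain ⟨y, hy⟩ := (lTensor_exact Q hf.2.1 hf.2.2 _).1 hz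
  have h1 : p.rTensor A y = 0 := by
    apply h
    rw [lr_comm, hy, map_zero]
    exact (rTensor_exact B hi.2.1 hi.2.2 _).2 ⟨z', rfl⟩
  obtain ⟨yy, rfl⟩ := (rTensor_exact A hi.2.1 hi.2.2 _).1 h1
  rw [lr_comm] at hy
  have h2 := Module.Flat.rTensor_preserves_injective_linearMap (M := B) i hi.1 hy
  rw [← h2]
  exact (lTensor_exact L hf.2.1 hf.2.2 _).2 ⟨yy, rfl⟩

/-- shift -/
theorem bal3 [Module.Flat R B] [Module.Flat R Q] {i : L →ₗ[R] Q} (hi : Function.Injective i)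
    {f : A →ₗ[R] B} (hf : Function.Injective f) :
    Function.Injective (f.lTensor L) ↔ Function.Injective (i.rTensor A) := by
  have h1 := Module.Flat.rTensor_preserves_injective_linearMap (M := B) i hi
  have h2 := Module.Flat.lTensor_preserves_injective_linearMap (M := Q) f hf
  constructor
  · intro h x y hxy
    apply h; apply h1
    rw [← lr_comm, ← lr_comm, hxy]
  · intro h x y hxy
    apply h; apply h2
    rw [lr_comm, lr_comm, hxy]
end bal

/-- pure when cokernel flat -/
theorem inj_lTensor_of_flat {R : Type u} [CommRing R] {A B C : Type u} [AddCommGroup A]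
    [Module R A] [AddCommGroup B] [Module R B] [AddCommGroup C] [Module R C]
    [Module.Flat R C] {f : A →ₗ[R] B} {g : B →ₗ[R] C} (hf : SES f g)
    (E : Type u) [AddCommGroup E] [Module R E] : Function.Injective (f.lTensor E) := by
  have hp : Function.Surjective (Finsupp.linearCombination R (id : E → E)) :=
    Finsupp.linearCombination_id_surjective R E
  exact bal1 (ses_subtype _ hp) hf (Module.Flat.rTensor_preserves_injective_linearMap _
    Subtype.val_injective)

theorem flat_of_pure {R : Type u} [CommRing R] {A B C : Type u} [AddCommGroup A]
    [Module R A] [AddCommGroup B] [Module R B] [AddCommGroup C] [Module R C]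
    [Module.Flat R B] {f : A →ₗ[R] B} {g : B →ₗ[R] C} (hf : SES f g)
    (h : ∀ (E : Type u) [AddCommGroup E] [Module R E], Function.Injective (f.lTensor E)) :
    Module.Flat R C := by
  rw [Module.Flat.iff_rTensor_injective']
  intro I
  have : SES I.subtype I.mkQ := ⟨Subtype.val_injective,
    LinearMap.exact_subtype_mkQ I, Submodule.mkQ_surjective _⟩
  exact bal2 this hf (h _)

/-- Over a noetherian ring the character module of an injective is flat -/
theorem flat_characterModule {R : Type u} [CommRing R] [IsNoetherianRing R] (J : Type u)
    [AddCommGroup J] [Module R J] (hJ : Module.Injective R J) :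
    Module.Flat R (CharacterModule J) := by
  rw [Module.Flat.iff_forall_isTrivialRelation]
  intro l f x hx
  let φ : (Fin l → R) →ₗ[R] R := Fintype.linearCombination R f
  have hφ : ∀ c, φ c = ∑ i, c i * f i := fun c => by
    simp [φ, Fintype.linearCombination_apply]
  obtain ⟨k, b, hb⟩ := Submodule.fg_iff_exists_fin_generating_family.1
    (IsNoetherian.noetherian (LinearMap.ker φ))
  -- second map
  let α : (Fin l → J) →ₗ[R] (Fin k → J) :=
    LinearMap.pi fun j => ∑ i, (b j i) • LinearMap.proj i
  have hα : ∀ e j, α e j = ∑ i, b j i • e i := fun e j => by simp [α]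
  let χ : (Fin l → J) →+ AddCircle (1 : ℚ) :=
    ∑ i, (x i : J →+ AddCircle (1 : ℚ)).comp (Pi.evalAddMonoidHom (fun _ => J) i)
  have hχ : ∀ e, χ e = ∑ i, x i (e i) := fun e => by
    simp [χ, AddMonoidHom.finsetSum_apply]
    rfl
  have key : ∀ e, α e = 0 → χ e = 0 := by
    intro e he
    let ψ : (Fin l → R) →ₗ[R] J := Fintype.linearCombination R e
    have hψ : ∀ c, ψ c = ∑ i, c i • e i := fun c => by
      simp [ψ, Fintype.linearCombination_apply]
    have hker : ∀ c, φ.rangeRestrict c = 0 → ψ c = 0 := by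
      intro c hc
      have hc' : c ∈ LinearMap.ker φ := by
        rw [LinearMap.mem_ker]; exact congrArg Subtype.val hc
      rw [← hb] at hc'
      have : Submodule.span R (Set.range b) ≤ LinearMap.ker ψ := by
        rw [Submodule.span_le]
        rintro _ ⟨j, rfl⟩
        simp only [SetLike.mem_coe, LinearMap.mem_ker]
        rw [hψ, ← hα, he]; rfl
      exact this hc'
    obtain ⟨ψ', hψ'⟩ := exists_factor φ.rangeRestrict φ.surjective_rangeRestrict ψ hker
    obtain ⟨ψ'', h2⟩ := hJ.out (LinearMap.range φ).subtype Subtype.val_injective ψ'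
    have h3 : ∀ c, ψ'' (φ c) = ψ c := fun c => by
      rw [← hψ' c, ← h2]; rfl
    have h4 : ∀ i, e i = f i • ψ'' 1 := by
      intro i
      have := h3 (Pi.single i 1)
      rw [hφ, hψ] at this
      simp [Pi.single_apply] at this
      rw [← this, ← map_smul, smul_eq_mul, mul_one]
    rw [hχ]
    have := DFunLike.congr_fun hx (ψ'' 1)
    rw [show (∑ i, f i • x i : CharacterModule J) (ψ'' 1) = ∑ i, (f i • x i) (ψ'' 1) from
      AddMonoidHom.finsetSum_apply _ _ _] at this
    rw [← show (0 : CharacterModule J) (ψ'' 1) = 0 from rfl, ← this]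
    refine Finset.sum_congr rfl fun i _ => ?_
    rw [h4 i]; rfl
  -- factor through the image and extend
  let χ' : (Fin l → J) →ₗ[ℤ] AddCircle (1 : ℚ) := χ.toIntLinearMap
  let α' : (Fin l → J) →ₗ[ℤ] (Fin k → J) := α.restrictScalars ℤ
  obtain ⟨c1, hc1⟩ := exists_factor α'.rangeRestrict α'.surjective_rangeRestrict χ' (by
    intro e he
    exact key e (congrArg Subtype.val he))
  obtain ⟨c2, hc2⟩ := CharacterModule.dual_surjective_of_injective
    (LinearMap.range α').subtype Subtype.val_injective (c1.toAddMonoidHom)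
  have hc3 : ∀ e, c2 (α e) = χ e := by
    intro e
    have := DFunLike.congr_fun hc2 (α'.rangeRestrict e)
    have h5 := hc1 e
    exact this.trans h5
  refine ⟨k, fun i j => b j i,
    fun j => (c2 : (Fin k → J) →+ AddCircle (1 : ℚ)).comp (AddMonoidHom.single (fun _ => J) j),
    ?_, ?_⟩
  · intro i
    ext e
    have h1 := hc3 (Pi.single i e)
    have h2 : χ (Pi.single i e) = x i e := by
      rw [hχ, Finset.sum_eq_single i]
      · simp
      · intro j _ hj
        rw [Pi.single_eq_of_ne hj]; exact map_zero (x j : J →+ AddCircle (1 : ℚ))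
      · simp
    rw [← h2, ← h1]
    have h3 : α (Pi.single i e) = ∑ j, Pi.single j (b j i • e) := by
      ext j
      rw [hα, Finset.sum_eq_single i]
      · simp [Finset.sum_apply, Pi.single_apply]
      · intro j' _ hj
        rw [Pi.single_eq_of_ne hj, smul_zero]
      · simp
    rw [h3]
    refine (map_sum (c2 : (Fin k → J) →+ AddCircle (1 : ℚ)) _ _).trans ?_
    refine Eq.trans ?_ (AddMonoidHom.finsetSum_apply _ _ _).symm
    rfl
  · intro j
    have : b j ∈ LinearMap.ker φ := by
      rw [← hb]; exact Submodule.subset_span ⟨j, rfl⟩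
    rw [LinearMap.mem_ker, hφ] at this
    rw [← this]
    exact Finset.sum_congr rfl fun i _ => mul_comm _ _

/-- tensoring with injectives keeps `f` injective -/
def Jm {R : Type u} [CommRing R] {A B : Type u} [AddCommGroup A]
    [Module R A] [AddCommGroup B] [Module R B] (f : A →ₗ[R] B) : Prop :=
  ∀ (E : Type u) [AddCommGroup E] [Module R E], Module.Injective R E →
    Function.Injective (f.lTensor E)

/-- extension property -/
def Cot (R : Type u) [CommRing R] (W : Type u) [AddCommGroup W] [Module R W] : Prop :=
  ∀ (A B : Type u) [AddCommGroup A] [Module R A] [AddCommGroup B] [Module R B]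
    (f : A →ₗ[R] B), Jm f → ∀ k : A →ₗ[R] W, ∃ k' : B →ₗ[R] W, ∀ x, k' (f x) = k x

theorem bidual (R : Type u) [CommRing R] [IsNoetherianRing R] (V : Type u) [AddCommGroup V]
    [Module R V] [Module.Flat R V] :
    ∃ (W L : Type u) (_ : AddCommGroup W) (_ : Module R W) (_ : AddCommGroup L)
      (_ : Module R L) (i : V →ₗ[R] W) (p : W →ₗ[R] L), SES i p ∧ Module.Flat R W ∧
        Module.Flat R L ∧ Cot R W := by
  have hinj : Module.Injective R (CharacterModule V) :=
    Module.Flat.iff_characterModule_injective.1 inferInstance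
  have hflat := flat_characterModule _ hinj
  let i : V →ₗ[R] CharacterModule (CharacterModule V) :=
    { toFun := fun v =>
        { toFun := fun c => c v
          map_zero' := rfl
          map_add' := fun _ _ => rfl }
      map_add' := fun v w => by ext c; exact map_add c v w
      map_smul' := fun r v => by ext c; rfl }
  have pure : ∀ (E : Type u) [AddCommGroup E] [Module R E],
      Function.Injective (i.lTensor E) := by
    intro E _ _
    rw [injective_iff_map_eq_zero]
    intro z hz
    apply CharacterModule.eq_zero_of_character_apply
    intro c
    let c1 : E →ₗ[R] CharacterModule V := CharacterModule.curry c
    let c2 : E →ₗ[R] CharacterModule (CharacterModule (CharacterModule V)) :=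
      { toFun := fun e =>
          { toFun := fun w => w (c1 e)
            map_zero' := rfl
            map_add' := fun _ _ => rfl }
        map_add' := fun v w => by ext c; simp only [map_add]; rfl
        map_smul' := fun r v => by ext c; simp only [map_smul]; rfl }
    let c3 := CharacterModule.uncurry c2
    have : ∀ z, c z = c3 (i.lTensor E z) := by
      intro z
      induction z with
      | zero => simp
      | add x y hx hy => rw [map_add, map_add, hx, hy, map_add]
      | tmul e v => rfl
    rw [this, hz, map_zero]
  have hi : Function.Injective i := by
    rw [injective_iff_map_eq_zero]
    intro v hv
    exact CharacterModule.eq_zero_of_character_apply fun c => DFunLike.congr_fun hv c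
  refine ⟨_, _, inferInstance, inferInstance, inferInstance, inferInstance, i,
    (LinearMap.range i).mkQ, ses_mkQ i hi, hflat, flat_of_pure (ses_mkQ i hi) pure, ?_⟩
  intro A B _ _ _ _ f hf k
  have := hf _ hinj
  have h2 : Function.Injective (f.rTensor (CharacterModule V)) :=
    (f.lTensor_inj_iff_rTensor_inj _).1 this
  rw [rTensor_injective_iff_lcomp_surjective] at h2
  obtain ⟨k', hk⟩ := h2 k
  exact ⟨k', fun x => by rw [← hk]; rfl⟩

theorem Jm.comp {R : Type u} [CommRing R] {A B C : Type u} [AddCommGroup A]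
    [Module R A] [AddCommGroup B] [Module R B] [AddCommGroup C] [Module R C]
    {f : A →ₗ[R] B} {g : B →ₗ[R] C} (hg : Jm g) (hf : Jm f) : Jm (g ∘ₗ f) := by
  intro E _ _ hE
  rw [LinearMap.lTensor_comp]
  exact (hg E hE).comp (hf E hE)

theorem Jm.of_flat {R : Type u} [CommRing R] {A B C : Type u} [AddCommGroup A]
    [Module R A] [AddCommGroup B] [Module R B] [AddCommGroup C] [Module R C]
    [Module.Flat R C] {f : A →ₗ[R] B} {g : B →ₗ[R] C} (hf : SES f g) : Jm f :=
  fun E _ _ _ => inj_lTensor_of_flat hf E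

theorem tensor_prod_ext {R : Type u} [CommRing R] {E V N : Type u} [AddCommGroup N] [Module R N]
    [AddCommGroup V] [Module R V] [AddCommGroup E] [Module R E] (z : E ⊗[R] (V × N))
    (h1 : (LinearMap.fst R V N).lTensor E z = 0) (h2 : (LinearMap.snd R V N).lTensor E z = 0) :
    z = 0 := by
  have h3 : z = (LinearMap.inl R V N).lTensor E ((LinearMap.fst R V N).lTensor E z) +
      (LinearMap.inr R V N).lTensor E ((LinearMap.snd R V N).lTensor E z) := by
    have h4 : LinearMap.inl R V N ∘ₗ LinearMap.fst R V N +
      LinearMap.inr R V N ∘ₗ LinearMap.snd R V N = LinearMap.id := by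
      ext x <;> simp
    rw [← LinearMap.comp_apply, ← LinearMap.comp_apply, ← LinearMap.lTensor_comp,
      ← LinearMap.lTensor_comp, ← LinearMap.add_apply, ← LinearMap.lTensor_add, h4]
    simp
  rw [h3, h1, h2, map_zero, map_zero, add_zero]

instance flat_prod {R : Type u} [CommRing R] {V N : Type u} [AddCommGroup N] [Module R N]
    [AddCommGroup V] [Module R V] [Module.Flat R V] [Module.Flat R N] :
    Module.Flat R (V × N) := by
  rw [Module.Flat.iff_rTensor_injective']
  intro I
  rw [injective_iff_map_eq_zero]
  intro z hz
  apply tensor_prod_ext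
  · apply Module.Flat.rTensor_preserves_injective_linearMap (M := V) I.subtype
      Subtype.val_injective
    rw [← lr_comm, hz, map_zero, map_zero]
  · apply Module.Flat.rTensor_preserves_injective_linearMap (M := N) I.subtype
      Subtype.val_injective
    rw [← lr_comm, hz, map_zero, map_zero]

/-- one coresolution step with `Q` as the cokernel -/
def CoStep (R : Type u) [CommRing R] (X Q : Type u) [AddCommGroup X] [Module R X]
    [AddCommGroup Q] [Module R Q] : Prop :=
  ∃ (G : Type u) (_ : AddCommGroup G) (_ : Module R G) (f : X →ₗ[R] G) (g : G →ₗ[R] Q),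
    SES f g ∧ Module.Flat R G ∧ Jm f

/-- modules with an injective-tensor-exact flat coresolution, coinductively -/
def InE (R : Type u) [CommRing R] (N : Type u) [AddCommGroup N] [Module R N] : Prop :=
  ∃ P : (X : Type u) → [AddCommGroup X] → [Module R X] → Prop,
    (∀ (X : Type u) [AddCommGroup X] [Module R X], P X →
      ∃ (Q : Type u) (_ : AddCommGroup Q) (_ : Module R Q), CoStep R X Q ∧ P Q) ∧ P N

section
variable {R : Type u} [CommRing R]

theorem InE.unfold {N : Type u} [AddCommGroup N] [Module R N] (h : InE R N) :
    ∃ (Q : Type u) (_ : AddCommGroup Q) (_ : Module R Q), CoStep R N Q ∧ InE R Q := by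
  obtain ⟨P, hP, hN⟩ := h
  obtain ⟨Q, i1, i2, h1, h2⟩ := hP N hN
  exact ⟨Q, i1, i2, h1, P, hP, h2⟩

theorem InE.fold {N Q : Type u} [AddCommGroup N] [Module R N] [AddCommGroup Q] [Module R Q]
    (h : CoStep R N Q) (hQ : InE R Q) : InE R N := by
  refine ⟨fun X _ _ => ∃ (Q : Type u) (_ : AddCommGroup Q) (_ : Module R Q),
    CoStep R X Q ∧ InE R Q, ?_, ⟨Q, _, _, h, hQ⟩⟩
  rintro X _ _ ⟨Q, i1, i2, h1, h2⟩
  exact ⟨Q, i1, i2, h1, h2.unfold⟩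

theorem comp_ses {N G Q W L : Type u} [AddCommGroup N] [Module R N] [AddCommGroup G] [Module R G]
    [AddCommGroup Q] [Module R Q] [AddCommGroup W] [Module R W] [AddCommGroup L] [Module R L]
    {a : N →ₗ[R] G} {q : G →ₗ[R] Q} {i : G →ₗ[R] W} {p : W →ₗ[R] L}
    (h1 : SES a q) (h2 : SES i p) :
    ∃ (Q2 : Type u) (_ : AddCommGroup Q2) (_ : Module R Q2) (q2 : W →ₗ[R] Q2)
      (u : Q →ₗ[R] Q2) (v : Q2 →ₗ[R] L), SES (i ∘ₗ a) q2 ∧ SES u v := by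
  have hs : SES (i ∘ₗ a) (LinearMap.range (i ∘ₗ a)).mkQ := ses_mkQ _ (h2.1.comp h1.1)
  obtain ⟨u, hu⟩ := exists_factor q h1.2.2 ((LinearMap.range (i ∘ₗ a)).mkQ ∘ₗ i) (by
    intro x hx
    obtain ⟨n, rfl⟩ := (h1.2.1 x).1 hx
    exact (hs.2.1 _).2 ⟨n, rfl⟩)
  obtain ⟨v, hv⟩ := exists_factor _ hs.2.2 p (by
    intro x hx
    obtain ⟨n, rfl⟩ := (hs.2.1 x).1 hx
    exact (h2.2.1 _).2 ⟨a n, rfl⟩)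
  refine ⟨_, inferInstance, inferInstance, (LinearMap.range (i ∘ₗ a)).mkQ, u, v, hs, ?_, ?_, ?_⟩
  · rw [injective_iff_map_eq_zero]
    intro y hy
    obtain ⟨x, rfl⟩ := h1.2.2 y
    rw [hu] at hy
    obtain ⟨n, hn⟩ := (hs.2.1 _).1 hy
    have := h2.1 hn
    rw [← this]
    exact (h1.2.1 _).2 ⟨n, rfl⟩
  · intro y
    obtain ⟨w, rfl⟩ := hs.2.2 y
    rw [hv]
    constructor
    · intro hw
      obtain ⟨x, rfl⟩ := (h2.2.1 _).1 hw
      exact ⟨q x, hu x⟩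
    · rintro ⟨y, hy⟩
      obtain ⟨x, rfl⟩ := h1.2.2 y
      rw [hu] at hy
      have h3 := congrArg v hy
      rw [hv, LinearMap.comp_apply, hv] at h3
      rw [← h3]
      exact (h2.2.1 _).2 ⟨x, rfl⟩
  · intro l
    obtain ⟨w, rfl⟩ := h2.2.2 l
    exact ⟨_, hv w⟩

/-- (a) extension of a flat module by a module in `InE` is in `InE`. -/
theorem InE.ext_flat [IsNoetherianRing R] {N A L : Type u} [AddCommGroup N] [Module R N]
    [AddCommGroup A] [Module R A] [AddCommGroup L] [Module R L] (hN : InE R N)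
    (hL : Module.Flat R L) {j : N →ₗ[R] A} {p : A →ₗ[R] L} (h : SES j p) : InE R A := by
  refine ⟨fun X _ _ => ∃ (N L : Type u) (_ : AddCommGroup N) (_ : Module R N)
    (_ : AddCommGroup L) (_ : Module R L) (j : N →ₗ[R] X) (p : X →ₗ[R] L),
      InE R N ∧ Module.Flat R L ∧ SES j p, ?_, ⟨N, L, _, _, _, _, j, p, hN, hL, h⟩⟩
  clear h hN hL
  rintro X _ _ ⟨N, L, _, _, _, _, j, p, hN, hL, h⟩
  obtain ⟨Q, _, _, ⟨G, _, _, a, q, haq, hG, ha⟩, hQ⟩ := hN.unfold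
  obtain ⟨W, K, _, _, _, _, i, π, hi, hW, hK, hC⟩ := bidual R G
  obtain ⟨Q2, _, _, q2, u, v, hq2, huv⟩ := comp_ses haq hi
  have hia : Jm (i ∘ₗ a) := (Jm.of_flat hi).comp ha
  obtain ⟨e, he⟩ := hC _ _ j (Jm.of_flat h) (i ∘ₗ a)
  obtain ⟨e', he'⟩ := exists_factor p h.2.2 (q2 ∘ₗ e) (by
    intro x hx
    obtain ⟨n, rfl⟩ := (h.2.1 x).1 hx
    rw [LinearMap.comp_apply, he]
    exact (hq2.2.1 _).2 ⟨n, rfl⟩)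
  refine ⟨Q2, _, _, ⟨W × L, inferInstance, inferInstance, e.prod p,
    q2 ∘ₗ LinearMap.fst R W L - e' ∘ₗ LinearMap.snd R W L, ⟨?_, ?_, ?_⟩, inferInstance, ?_⟩,
    Q, K, _, _, _, _, u, v, hQ, hK, huv⟩
  · rw [injective_iff_map_eq_zero]
    intro x hx
    have h1 : e x = 0 := congrArg Prod.fst hx
    have h2 : p x = 0 := congrArg Prod.snd hx
    obtain ⟨n, rfl⟩ := (h.2.1 x).1 h2
    rw [he] at h1
    rw [hq2.1 (h1.trans (map_zero _).symm), map_zero]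
  · rintro ⟨w, l⟩
    constructor
    · intro hw
      obtain ⟨x, rfl⟩ := h.2.2 l
      have hw' : q2 (w - e x) = 0 := by
        rw [map_sub]; rw [← LinearMap.comp_apply, ← he']; exact hw
      obtain ⟨n, hn⟩ := (hq2.2.1 _).1 hw'
      refine ⟨x + j n, Prod.ext ?_ ?_⟩
      · change e (x + j n) = w
        rw [map_add, he, hn]; abel
      · change p (x + j n) = p x
        rw [map_add, (h.2.1 _).2 ⟨n, rfl⟩, add_zero]
    · rintro ⟨x, hx⟩
      obtain ⟨rfl, rfl⟩ := Prod.ext_iff.1 hx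
      change q2 (e x) - e' (p x) = 0
      rw [he']; exact sub_self _
  · intro y
    obtain ⟨w, rfl⟩ := hq2.2.2 y
    exact ⟨(w, 0), by simp⟩
  · intro E _ _ hE
    rw [injective_iff_map_eq_zero]
    intro z hz
    have h1 : e.lTensor E z = 0 := by
      have : e = LinearMap.fst R W L ∘ₗ e.prod p := rfl
      rw [this, LinearMap.lTensor_comp, LinearMap.comp_apply, hz, map_zero]
    have h2 : p.lTensor E z = 0 := by
      have : p = LinearMap.snd R W L ∘ₗ e.prod p := rfl
      rw [this, LinearMap.lTensor_comp, LinearMap.comp_apply, hz, map_zero]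
    obtain ⟨n, rfl⟩ := (lTensor_exact E h.2.1 h.2.2 _).1 h2
    rw [← LinearMap.comp_apply, ← LinearMap.lTensor_comp] at h1
    have h3 : e ∘ₗ j = i ∘ₗ a := LinearMap.ext he
    rw [h3] at h1
    rw [hia E hE (h1.trans (map_zero _).symm), map_zero]

/-- a coresolution step whose middle term has the extension property -/
theorem InE.cot [IsNoetherianRing R] {N : Type u} [AddCommGroup N] [Module R N] (hN : InE R N) :
    ∃ (W Q : Type u) (_ : AddCommGroup W) (_ : Module R W) (_ : AddCommGroup Q)
      (_ : Module R Q) (a : N →ₗ[R] W) (q : W →ₗ[R] Q), SES a q ∧ Module.Flat R W ∧ Cot R W ∧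
      Jm a ∧ InE R Q := by
  obtain ⟨Q, _, _, ⟨G, _, _, a, q, haq, hG, ha⟩, hQ⟩ := hN.unfold
  obtain ⟨W, K, _, _, _, _, i, π, hi, hW, hK, hC⟩ := bidual R G
  obtain ⟨Q2, _, _, q2, u, v, hq2, huv⟩ := comp_ses haq hi
  exact ⟨W, Q2, _, _, _, _, i ∘ₗ a, q2, hq2, hW, hC, (Jm.of_flat hi).comp ha,
    hQ.ext_flat hK huv⟩

theorem InE.prod {N V : Type u} [AddCommGroup N] [Module R N] [AddCommGroup V] [Module R V]
    [Module.Flat R V] (hN : InE R N) : InE R (V × N) := by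
  obtain ⟨Q, _, _, ⟨G, _, _, a, q, haq, hG, ha⟩, hQ⟩ := hN.unfold
  refine InE.fold ⟨V × G, inferInstance, inferInstance, LinearMap.id.prodMap a,
    q ∘ₗ LinearMap.snd R V G, ⟨?_, ?_, ?_⟩, inferInstance, ?_⟩ hQ
  · exact Function.Injective.prodMap Function.injective_id haq.1
  · rintro ⟨v, x⟩
    constructor
    · intro hx
      obtain ⟨n, hn⟩ := (haq.2.1 x).1 hx
      exact ⟨(v, n), by simp [hn]⟩
    · rintro ⟨⟨v', n⟩, hx⟩
      obtain ⟨rfl, rfl⟩ := Prod.ext_iff.1 hx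
      exact (haq.2.1 _).2 ⟨n, rfl⟩
  · intro y
    obtain ⟨x, rfl⟩ := haq.2.2 y
    exact ⟨(0, x), rfl⟩
  · intro E _ _ hE
    rw [injective_iff_map_eq_zero]
    intro z hz
    -- project to both factors
    have h1 : (LinearMap.fst R V N).lTensor E z = 0 := by
      have : LinearMap.fst R V N = LinearMap.fst R V G ∘ₗ LinearMap.id.prodMap a := rfl
      rw [this, LinearMap.lTensor_comp, LinearMap.comp_apply, hz, map_zero]
    have h2 : (LinearMap.snd R V N).lTensor E z = 0 := by
      apply ha E hE
      rw [← LinearMap.comp_apply, ← LinearMap.lTensor_comp]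
      have : a ∘ₗ LinearMap.snd R V N = LinearMap.snd R V G ∘ₗ LinearMap.id.prodMap a := rfl
      rw [this, LinearMap.lTensor_comp, LinearMap.comp_apply, hz, map_zero, map_zero]
    exact tensor_prod_ext z h1 h2

/-- (b) kernel of a map to a flat module -/
theorem InE.ker_flat [IsNoetherianRing R] {K D L : Type u} [AddCommGroup K] [Module R K]
    [AddCommGroup D] [Module R D] [AddCommGroup L] [Module R L] (hD : InE R D)
    (hL : Module.Flat R L) {j : K →ₗ[R] D} {p : D →ₗ[R] L} (h : SES j p) : InE R K := by
  refine ⟨fun X _ _ => ∃ (D L : Type u) (_ : AddCommGroup D) (_ : Module R D)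
    (_ : AddCommGroup L) (_ : Module R L) (j : X →ₗ[R] D) (p : D →ₗ[R] L),
      InE R D ∧ Module.Flat R L ∧ SES j p, ?_, ⟨D, L, _, _, _, _, j, p, hD, hL, h⟩⟩
  clear h hD hL
  rintro K _ _ ⟨D, L, _, _, _, _, j, p, hD, hL, h⟩
  obtain ⟨Q, _, _, ⟨G, _, _, a, q, haq, hG, ha⟩, hQ⟩ := hD.unfold
  obtain ⟨W, T, _, _, _, _, i, π, hi, hW, hT, hC⟩ := bidual R L
  obtain ⟨e, he⟩ := hC _ _ a ha (i ∘ₗ p)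
  obtain ⟨e', he'⟩ := exists_factor q haq.2.2 (π ∘ₗ e) (by
    intro x hx
    obtain ⟨n, rfl⟩ := (haq.2.1 x).1 hx
    rw [LinearMap.comp_apply, he]
    exact (hi.2.1 _).2 ⟨p n, rfl⟩)
  refine ⟨LinearMap.range (e.prod q), inferInstance, inferInstance,
    ⟨G, _, _, a ∘ₗ j, (e.prod q).rangeRestrict,
      ⟨haq.1.comp h.1, ?_, LinearMap.surjective_rangeRestrict _⟩, hG, ha.comp (Jm.of_flat h)⟩,
    W × Q, T, inferInstance, inferInstance, _, _, (LinearMap.range (e.prod q)).subtype,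
    π ∘ₗ LinearMap.fst R W Q - e' ∘ₗ LinearMap.snd R W Q, hQ.prod, hT,
    Subtype.val_injective, ?_, ?_⟩
  · intro x
    constructor
    · intro hx
      have hx' := congrArg Subtype.val hx
      have h1 : e x = 0 := congrArg Prod.fst hx'
      have h2 : q x = 0 := congrArg Prod.snd hx'
      obtain ⟨d, rfl⟩ := (haq.2.1 _).1 h2
      rw [he] at h1
      obtain ⟨k, rfl⟩ := (h.2.1 _).1 (hi.1 (h1.trans (map_zero _).symm))
      exact ⟨k, rfl⟩
    · rintro ⟨k, rfl⟩
      apply Subtype.ext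
      refine Prod.ext ?_ ?_
      · change e (a (j k)) = 0
        rw [he, LinearMap.comp_apply, (h.2.1 _).2 ⟨k, rfl⟩, map_zero]
      · exact (haq.2.1 _).2 ⟨j k, rfl⟩
  · rintro ⟨w, y⟩
    constructor
    · intro hw
      obtain ⟨x, rfl⟩ := haq.2.2 y
      have hw' : π (w - e x) = 0 := by
        rw [map_sub]; rw [← LinearMap.comp_apply, ← he']; exact hw
      obtain ⟨l, hl⟩ := (hi.2.1 _).1 hw'
      obtain ⟨d, rfl⟩ := h.2.2 l
      refine ⟨⟨_, x + a d, rfl⟩, Prod.ext ?_ ?_⟩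
      · change e (x + a d) = w
        rw [map_add, he, LinearMap.comp_apply, hl]; abel
      · change q (x + a d) = q x
        rw [map_add, (haq.2.1 _).2 ⟨d, rfl⟩, add_zero]
    · rintro ⟨⟨_, x, rfl⟩, hx⟩
      obtain ⟨rfl, rfl⟩ := Prod.ext_iff.1 hx
      change π (e x) - e' (q x) = 0
      rw [he']; exact sub_self _
  · intro y
    obtain ⟨w, rfl⟩ := hi.2.2 y
    exact ⟨(w, 0), by simp⟩

theorem InE.inj [IsNoetherianRing R] {N V : Type u} [AddCommGroup N] [Module R N]
    [AddCommGroup V] [Module R V] (hN : InE R N) {f : N →ₗ[R] V} (hf : Jm f) :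
    Function.Injective f := by
  obtain ⟨W, Q, _, _, _, _, a, q, haq, hW, hC, ha, hQ⟩ := hN.cot
  obtain ⟨h, hh⟩ := hC _ _ f hf a
  intro x y hxy
  apply haq.1
  rw [← hh, ← hh, hxy]

/-- (2) the cokernel of any relevant map to a flat module is again in `InE`. -/
theorem InE.coker [IsNoetherianRing R] {N V C : Type u} [AddCommGroup N] [Module R N]
    [AddCommGroup V] [Module R V] [AddCommGroup C] [Module R C] [Module.Flat R V]
    (hN : InE R N) {f : N →ₗ[R] V} {c : V →ₗ[R] C} (hs : SES f c) (hf : Jm f) : InE R C := by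
  obtain ⟨G, Q, _, _, _, _, a, q, haq, hG, hC, ha, hQ⟩ := hN.cot
  obtain ⟨h', hh'⟩ := hC _ _ f hf a
  obtain ⟨W, T, _, _, _, _, i, π, hi, hW, hT, hCW⟩ := bidual R V
  obtain ⟨h, hh⟩ := hCW _ _ a ha (i ∘ₗ f)
  suffices hX : InE R (G × C) by
    refine hX.ker_flat hG (j := LinearMap.inr R G C) (p := LinearMap.fst R G C) ⟨?_, ?_, ?_⟩
    · exact LinearMap.inr_injective
    · rintro ⟨x, y⟩
      constructor
      · intro (hx : x = 0)
        exact ⟨y, by simp [hx]⟩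
      · rintro ⟨y', hy⟩
        exact (congrArg Prod.fst hy).symm
    · exact Prod.fst_surjective
  -- the map V × G → G × C with kernel N
  let m : V × G →ₗ[R] G × C :=
    (LinearMap.snd R V G - h' ∘ₗ LinearMap.fst R V G).prod (c ∘ₗ LinearMap.fst R V G)
  have hm : ∀ v x, m (v, x) = (x - h' v, c v) := fun _ _ => rfl
  have hms : Function.Surjective m := by
    rintro ⟨x, y⟩
    obtain ⟨v, rfl⟩ := hs.2.2 y
    exact ⟨(v, x + h' v), by rw [hm]; simp⟩
  have hmk : ∀ v x, m (v, x) = 0 → ∃ n, f n = v ∧ a n = x := by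
    intro v x hvx
    rw [hm] at hvx
    obtain ⟨h1, h2⟩ := Prod.ext_iff.1 hvx
    obtain ⟨n, rfl⟩ := (hs.2.1 _).1 h2
    refine ⟨n, rfl, ?_⟩
    have : x - h' (f n) = 0 := h1
    rw [hh'] at this
    exact (sub_eq_zero.1 this).symm
  let k : V × G →ₗ[R] W × Q :=
    (i ∘ₗ LinearMap.fst R V G - h ∘ₗ LinearMap.snd R V G).prod (q ∘ₗ LinearMap.snd R V G)
  have hk : ∀ v x, k (v, x) = (i v - h x, q x) := fun _ _ => rfl
  obtain ⟨θ, hθ⟩ := exists_factor m hms k (by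
    rintro ⟨v, x⟩ hvx
    obtain ⟨n, rfl, rfl⟩ := hmk v x hvx
    rw [hk, hh, (haq.2.1 _).2 ⟨n, rfl⟩]
    simp)
  obtain ⟨t, ht⟩ := exists_factor q haq.2.2 (π ∘ₗ h) (by
    intro x hx
    obtain ⟨n, rfl⟩ := (haq.2.1 x).1 hx
    rw [LinearMap.comp_apply, hh]
    exact (hi.2.1 _).2 ⟨f n, rfl⟩)
  refine (hQ.prod (V := W)).ker_flat hT (j := θ)
    (p := π ∘ₗ LinearMap.fst R W Q + t ∘ₗ LinearMap.snd R W Q) ⟨?_, ?_, ?_⟩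
  · rw [injective_iff_map_eq_zero]
    intro y hy
    obtain ⟨⟨v, x⟩, rfl⟩ := hms y
    rw [hθ, hk] at hy
    obtain ⟨h1, h2⟩ := Prod.ext_iff.1 hy
    obtain ⟨n, rfl⟩ := (haq.2.1 _).1 h2
    have h3 : i v - h (a n) = 0 := h1
    rw [hh, sub_eq_zero] at h3
    have h4 : v = f n := hi.1 h3
    rw [hm, h4, hh', (hs.2.1 _).2 ⟨n, rfl⟩]
    simp
  · rintro ⟨w, y⟩
    obtain ⟨x, rfl⟩ := haq.2.2 y
    constructor
    · intro hw
      have hw' : π (w + h x) = 0 := by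
        rw [map_add]; rw [← LinearMap.comp_apply π h, ← ht]; exact hw
      obtain ⟨v, hv⟩ := (hi.2.1 _).1 hw'
      exact ⟨m (v, x), by rw [hθ, hk, hv]; simp⟩
    · rintro ⟨y, hy⟩
      obtain ⟨⟨v, x'⟩, rfl⟩ := hms y
      rw [hθ, hk] at hy
      rw [← hy]
      change π (i v - h x') + t (q x') = 0
      rw [ht, map_sub, (hi.2.1 _).2 ⟨v, rfl⟩]
      simp
  · intro y
    obtain ⟨w, rfl⟩ := hi.2.2 y
    exact ⟨(w, 0), by simp⟩
end

section tv
variable {R : Type u} [CommRing R]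

/-- the canonical free cover -/
noncomputable def freeCover (R : Type u) [CommRing R] (E : Type u) [AddCommGroup E]
    [Module R E] : (E →₀ R) →ₗ[R] E := Finsupp.linearCombination R (id : E → E)

theorem freeCover_ses (E : Type u) [AddCommGroup E] [Module R E] :
    SES (R := R) (A := LinearMap.ker (freeCover R E)) (B := E →₀ R) (C := E)
      (LinearMap.ker (freeCover R E)).subtype (freeCover R E) :=
  ses_subtype _ (Finsupp.linearCombination_id_surjective R E)

/-- elementary form of the vanishing of `Tor_{n+1}` -/
def Tvan (R : Type u) [CommRing R] : ℕ → (E M : Type u) → [AddCommGroup E] → [Module R E] →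
    [AddCommGroup M] → [Module R M] → Prop
  | 0, E, M, _, _, _, _ =>
      Function.Injective ((LinearMap.ker (freeCover R E)).subtype.rTensor M)
  | n + 1, E, M, _, _, _, _ => Tvan R n (LinearMap.ker (freeCover R E)) M

theorem tvan_zero {K P M : Type u} [AddCommGroup K] [Module R K] [AddCommGroup P] [Module R P]
    [AddCommGroup M] [Module R M] [Module.Flat R P] {f : K →ₗ[R] P} {g : P →ₗ[R] M}
    (h : SES f g) (E : Type u) [AddCommGroup E] [Module R E] :
    Tvan R 0 E M ↔ Function.Injective (f.lTensor E) :=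
  ⟨fun H => bal1 (freeCover_ses E) h H, fun H => bal2 (freeCover_ses E) h H⟩

theorem tvan_succ {K P M : Type u} [AddCommGroup K] [Module R K] [AddCommGroup P] [Module R P]
    [AddCommGroup M] [Module R M] [Module.Flat R P] {f : K →ₗ[R] P} {g : P →ₗ[R] M}
    (h : SES f g) (n : ℕ) (E : Type u) [AddCommGroup E] [Module R E] :
    Tvan R (n + 1) E M ↔ Tvan R n E K := by
  induction n generalizing E with
  | zero =>
    change Tvan R 0 (LinearMap.ker (freeCover R E)) M ↔ _
    refine (tvan_zero h _).trans ?_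
    change _ ↔ Function.Injective ((LinearMap.ker (freeCover R E)).subtype.rTensor K)
    have h1 : Function.Injective (LinearMap.ker (freeCover R E)).subtype := (freeCover_ses E).1
    exact bal3 (L := LinearMap.ker (freeCover R E)) (Q := E →₀ R) h1 (f := f) h.1
  | succ n ih =>
    have := ih (LinearMap.ker (freeCover R E))
    exact this

theorem CoStep.of_tvan {M : Type u} [AddCommGroup M] [Module R M]
    (h : ∀ (E : Type u) [AddCommGroup E] [Module R E], Module.Injective R E →
      ∀ n, Tvan R n E M) :
    ∃ (K : Type u) (_ : AddCommGroup K) (_ : Module R K), CoStep R K M ∧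
      ∀ (E : Type u) [AddCommGroup E] [Module R E], Module.Injective R E →
      ∀ n, Tvan R n E K := by
  refine ⟨LinearMap.ker (freeCover R M), inferInstance, inferInstance,
    ⟨M →₀ R, inferInstance, inferInstance, _, _, freeCover_ses M, inferInstance, ?_⟩, ?_⟩
  · intro E _ _ hE
    exact (tvan_zero (freeCover_ses M) E).1 (h E hE 0)
  · intro E _ _ hE n
    exact (tvan_succ (freeCover_ses M) n E).1 (h E hE (n + 1))

theorem SES.congr {A B C A' C' : Type u} [AddCommGroup A] [Module R A] [AddCommGroup B]
    [Module R B] [AddCommGroup C] [Module R C] [AddCommGroup A'] [Module R A']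
    [AddCommGroup C'] [Module R C'] {f : A →ₗ[R] B} {g : B →ₗ[R] C} (h : SES f g)
    (e : A' ≃ₗ[R] A) (e' : C ≃ₗ[R] C') : SES (f ∘ₗ e.toLinearMap) (e'.toLinearMap ∘ₗ g) := by
  refine ⟨h.1.comp e.injective, ?_, e'.surjective.comp h.2.2⟩
  intro x
  simp only [LinearMap.comp_apply, LinearEquiv.coe_coe, map_eq_zero_iff e' e'.injective]
  rw [h.2.1]
  constructor
  · rintro ⟨a, rfl⟩
    exact ⟨e.symm a, by simp⟩
  · rintro ⟨a, rfl⟩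
    exact ⟨e a, by simp⟩

theorem Jm.of_equiv {A A' : Type u} [AddCommGroup A] [Module R A] [AddCommGroup A'] [Module R A']
    (e : A' ≃ₗ[R] A) : Jm e.toLinearMap := fun E _ _ _ => (e.lTensor E).injective

theorem CoStep.congr {A C A' C' : Type u} [AddCommGroup A] [Module R A]
    [AddCommGroup C] [Module R C] [AddCommGroup A'] [Module R A']
    [AddCommGroup C'] [Module R C'] (h : CoStep R A C) (e : A' ≃ₗ[R] A) (e' : C ≃ₗ[R] C') :
    CoStep R A' C' := by
  obtain ⟨G, _, _, f, g, h1, h2, h3⟩ := h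
  exact ⟨G, _, _, _, _, h1.congr e e', h2, h3.comp (Jm.of_equiv e)⟩

theorem gf_congr {M N : Type u} [AddCommGroup M] [Module R M] [AddCommGroup N] [Module R N]
    (e : M ≃ₗ[R] N) (h : IsGorensteinFlat R N) : IsGorensteinFlat R M := by
  obtain ⟨w⟩ := h
  obtain ⟨i⟩ := w.im_iso
  letI := w.acg
  letI := w.mod
  exact ⟨{ F := w.F, acg := w.acg, mod := w.mod, flat := w.flat, d := w.d,
           d_comp_d := w.d_comp_d, exact := w.exact, tensor_exact := w.tensor_exact,
           im_iso := ⟨e.trans i⟩ }⟩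

theorem gf_of_chain (Z : ℤ → ModuleCat.{u} R) (h : ∀ i, CoStep R (Z i) (Z (i - 1))) :
    IsGorensteinFlat R (Z (-1)) := by
  choose F a m f g h1 h2 h3 using h
  have cast : ∀ j i, j = i → Nonempty (Z j ≃ₗ[R] Z i) := by
    rintro j _ rfl; exact ⟨LinearEquiv.refl R _⟩
  let e : ∀ i, Z (i + 1 - 1) ≃ₗ[R] Z i := fun i => (cast _ _ (by ring)).some
  obtain ⟨g', hs⟩ : ∃ g' : ∀ i, F (i + 1) →ₗ[R] Z i, ∀ i, SES (f (i + 1)) (g' i) :=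
    ⟨fun i => (e i).toLinearMap ∘ₗ g (i + 1), fun i =>
      (h1 (i + 1)).congr (LinearEquiv.refl R _) (e i)⟩
  let d : ∀ i, F (i + 1) →ₗ[R] F i := fun i => f i ∘ₗ g' i
  have hex : ∀ i, LinearMap.ker (d i) = LinearMap.range (d (i + 1)) := by
    intro i
    rw [LinearMap.range_comp_of_range_eq_top _ (LinearMap.range_eq_top.2 (hs (i + 1)).2.2),
      LinearMap.ker_comp_of_ker_eq_bot _ (LinearMap.ker_eq_bot.2 (h1 i).1)]
    exact LinearMap.exact_iff.1 (hs i).2.1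
  refine ⟨{ F := F, acg := a, mod := m, flat := h2, d := d, d_comp_d := ?_, exact := hex,
            tensor_exact := ?_, im_iso := ?_ }⟩
  · intro i
    ext x
    have : d (i + 1) x ∈ LinearMap.ker (d i) := by rw [hex]; exact ⟨x, rfl⟩
    exact this
  · intro E _ _ hE i
    change LinearMap.ker (LinearMap.lTensor E (f i ∘ₗ g' i)) =
      LinearMap.range (LinearMap.lTensor E (f (i + 1) ∘ₗ g' (i + 1)))
    rw [LinearMap.lTensor_comp, LinearMap.lTensor_comp,
      LinearMap.range_comp_of_range_eq_top _ (LinearMap.range_eq_top.2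
        (LinearMap.lTensor_surjective E (hs (i + 1)).2.2)),
      LinearMap.ker_comp_of_ker_eq_bot _ (LinearMap.ker_eq_bot.2 (h3 i E hE))]
    exact LinearMap.exact_iff.1 (lTensor_exact E (hs i).2.1 (hs i).2.2)
  · have : LinearMap.range (d (-1)) = LinearMap.range (f (-1)) :=
      LinearMap.range_comp_of_range_eq_top _ (LinearMap.range_eq_top.2 (hs (-1)).2.2)
    rw [this]
    exact ⟨LinearEquiv.ofInjective _ (h1 (-1)).1⟩

theorem chain_of_gf {M : Type u} [AddCommGroup M] [Module R M] (h : IsGorensteinFlat R M) :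
    ∃ Z : ℤ → ModuleCat.{u} R, (∀ i, CoStep R (Z i) (Z (i - 1))) ∧ Nonempty (M ≃ₗ[R] Z (-1)) := by
  obtain ⟨w⟩ := h
  letI := w.acg
  letI := w.mod
  have := w.flat
  refine ⟨fun i => ModuleCat.of R (LinearMap.range (w.d i)), ?_, w.im_iso⟩
  intro i
  obtain ⟨j, rfl⟩ : ∃ j, i = j + 1 := ⟨i - 1, by ring⟩
  rw [add_sub_cancel_right]
  refine ⟨w.F (j + 1), inferInstance, inferInstance, (LinearMap.range (w.d (j + 1))).subtype,
    (w.d j).rangeRestrict, ⟨Subtype.val_injective, ?_, LinearMap.surjective_rangeRestrict _⟩,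
    inferInstance, ?_⟩
  · rw [LinearMap.exact_iff, LinearMap.ker_rangeRestrict, Submodule.range_subtype]
    exact w.exact j
  · intro E _ _ hE
    rw [injective_iff_map_eq_zero]
    intro z hz
    obtain ⟨z', rfl⟩ := LinearMap.lTensor_surjective E
      (LinearMap.surjective_rangeRestrict (w.d (j + 1))) z
    rw [← LinearMap.comp_apply, ← LinearMap.lTensor_comp, show (LinearMap.range (w.d (j + 1))).subtype ∘ₗ (w.d (j + 1)).rangeRestrict = w.d (j + 1)
      from rfl] at hz
    have hz' : z' ∈ LinearMap.ker ((w.d (j + 1)).lTensor E) := hz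
    rw [w.tensor_exact E hE] at hz'
    obtain ⟨y, rfl⟩ := hz'
    rw [← LinearMap.comp_apply, ← LinearMap.lTensor_comp]
    have : (w.d (j + 1)).rangeRestrict ∘ₗ w.d (j + 1 + 1) = 0 := by
      ext x
      exact LinearMap.congr_fun (w.d_comp_d (j + 1)) x
    rw [this, LinearMap.lTensor_zero, LinearMap.zero_apply]

theorem InE.of_chain (Z : ℤ → ModuleCat.{u} R) (h : ∀ i, CoStep R (Z i) (Z (i - 1)))
    {M : Type u} [AddCommGroup M] [Module R M] (e : M ≃ₗ[R] Z (-1)) : InE R M := by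
  refine ⟨fun X _ _ => ∃ i, Nonempty (X ≃ₗ[R] Z i), ?_, ⟨-1, ⟨e⟩⟩⟩
  rintro X _ _ ⟨i, ⟨e⟩⟩
  exact ⟨Z (i - 1), inferInstance, inferInstance, (h i).congr e (LinearEquiv.refl R _),
    i - 1, ⟨LinearEquiv.refl R _⟩⟩

theorem Tvan.of_chain (Z : ℤ → ModuleCat.{u} R) (h : ∀ i, CoStep R (Z i) (Z (i - 1)))
    {M : Type u} [AddCommGroup M] [Module R M] (e : M ≃ₗ[R] Z (-1))
    (E : Type u) [AddCommGroup E] [Module R E] (hE : Module.Injective R E) (n : ℕ) :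
    Tvan R n E M := by
  have key : ∀ n i, Tvan R n E (Z i) := by
    intro n
    induction n with
    | zero =>
      intro i
      have := h (i + 1)
      rw [add_sub_cancel_right] at this
      obtain ⟨G, _, _, f, g, h1, h2, h3⟩ := this
      exact (tvan_zero h1 E).2 (h3 E hE)
    | succ n ih =>
      intro i
      have := h (i + 1)
      rw [add_sub_cancel_right] at this
      obtain ⟨G, _, _, f, g, h1, h2, h3⟩ := this
      exact (tvan_succ h1 n E).2 (ih _)
  obtain ⟨G, _, _, f, g, h1, h2, h3⟩ := (h 0).congr (LinearEquiv.refl R _) e.symm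
  cases n with
  | zero => exact (tvan_zero h1 E).2 (h3 E hE)
  | succ n => exact (tvan_succ h1 n E).2 (key _ _)

theorem gf_of_InE {M : Type u} [AddCommGroup M] [Module R M] (hM : InE R M)
    (ht : ∀ (E : Type u) [AddCommGroup E] [Module R E], Module.Injective R E →
      ∀ n, Tvan R n E M) : IsGorensteinFlat R M := by
  let T := {X : ModuleCat.{u} R // ∀ (E : Type u) [AddCommGroup E] [Module R E],
    Module.Injective R E → ∀ n, Tvan R n E X}
  let T' := {X : ModuleCat.{u} R // InE R X}
  have s1 : ∀ X : T, ∃ Y : T, CoStep R Y.1 X.1 := by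
    rintro ⟨X, hX⟩
    obtain ⟨K, _, _, h1, h2⟩ := CoStep.of_tvan hX
    exact ⟨⟨ModuleCat.of R K, h2⟩, h1⟩
  have s2 : ∀ X : T', ∃ Y : T', CoStep R X.1 Y.1 := by
    rintro ⟨X, hX⟩
    obtain ⟨K, _, _, h1, h2⟩ := hX.unfold
    exact ⟨⟨ModuleCat.of R K, h2⟩, h1⟩
  choose n1 hn1 using s1
  choose n2 hn2 using s2
  let A : ℕ → T := fun n => n1^[n] ⟨ModuleCat.of R M, ht⟩
  let B : ℕ → T' := fun n => n2^[n] ⟨ModuleCat.of R M, hM⟩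
  let Z : ℤ → ModuleCat.{u} R := fun i => match i with
    | Int.ofNat n => (A (n + 1)).1
    | Int.negSucc n => (B n).1
  have hA : ∀ n, CoStep R (A (n + 1)).1 (A n).1 := by
    intro n
    change CoStep R (n1^[n + 1] _).1 (n1^[n] _).1
    rw [Function.iterate_succ_apply']
    exact hn1 _
  have hB : ∀ n, CoStep R (B n).1 (B (n + 1)).1 := by
    intro n
    change CoStep R (n2^[n] _).1 (n2^[n + 1] _).1
    rw [Function.iterate_succ_apply']
    exact hn2 _
  refine gf_of_chain Z ?_
  intro i
  rcases i with (_ | n) | n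
  · exact hA 0
  · have : Int.ofNat (n + 1) - 1 = Int.ofNat n := by simp
    rw [this]
    exact hA (n + 1)
  · have : Int.negSucc n - 1 = Int.negSucc (n + 1) := by omega
    rw [this]
    exact hB n

/-- comparison with exactness of a tensored resolution -/
theorem tvan_iff_exact (P : ℕ → Type u) [∀ n, AddCommGroup (P n)] [∀ n, Module R (P n)]
    [∀ n, Module.Flat R (P n)] (d : ∀ n, P (n + 1) →ₗ[R] P n) {M : Type u} [AddCommGroup M]
    [Module R M] (ε : P 0 →ₗ[R] M) (hε : Function.Surjective ε) (h0 : Function.Exact (d 0) ε)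
    (hd : ∀ n, Function.Exact (d (n + 1)) (d n)) (n : ℕ)
    (E : Type u) [AddCommGroup E] [Module R E] :
    Tvan R n E M ↔ Function.Exact ((d (n + 1)).lTensor E) ((d n).lTensor E) := by
  have s0 : SES (LinearMap.range (d 0)).subtype ε := by
    refine ⟨Subtype.val_injective, ?_, hε⟩
    rw [LinearMap.exact_iff, Submodule.range_subtype]
    exact LinearMap.exact_iff.1 h0
  have hr : ∀ n, Function.Exact (d (n + 1)) (d n).rangeRestrict := by
    intro n
    rw [LinearMap.exact_iff, LinearMap.ker_rangeRestrict]
    exact LinearMap.exact_iff.1 (hd n)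
  have s : ∀ n, SES (LinearMap.range (d (n + 1))).subtype (d n).rangeRestrict := by
    intro n
    refine ⟨Subtype.val_injective, ?_, LinearMap.surjective_rangeRestrict _⟩
    rw [LinearMap.exact_iff, Submodule.range_subtype]
    exact LinearMap.exact_iff.1 (hr n)
  have k1 : ∀ m k, Tvan R m E (LinearMap.range (d k)) ↔
      Function.Injective ((LinearMap.range (d (k + m + 1))).subtype.lTensor E) := by
    intro m
    induction m with
    | zero => intro k; exact tvan_zero (s k) E
    | succ m ih =>
      intro k
      rw [tvan_succ (s k), ih, show k + 1 + m + 1 = k + (m + 1) + 1 by ring]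
  have k2 : Tvan R n E M ↔ Function.Injective ((LinearMap.range (d n)).subtype.lTensor E) := by
    cases n with
    | zero => exact tvan_zero s0 E
    | succ n => rw [tvan_succ s0, k1, zero_add]
  rw [k2]
  have hex := lTensor_exact E (hr n) (LinearMap.surjective_rangeRestrict (d n))
  have hc : ∀ z, (d n).lTensor E z =
      (LinearMap.range (d n)).subtype.lTensor E ((d n).rangeRestrict.lTensor E z) := by
    intro z
    rw [← LinearMap.comp_apply, ← LinearMap.lTensor_comp, show (LinearMap.range (d n)).subtype ∘ₗ (d n).rangeRestrict = d n from rfl]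
  constructor
  · intro hi z
    rw [hc, map_eq_zero_iff _ hi]
    exact hex z
  · intro H
    rw [injective_iff_map_eq_zero]
    intro z hz
    obtain ⟨z', rfl⟩ := LinearMap.lTensor_surjective E
      (LinearMap.surjective_rangeRestrict (d n)) z
    rw [← hc] at hz
    exact (hex z').2 ((H z').1 hz)

end tv

section bc
variable {R S : Type u} [CommRing R] [CommRing S] [Algebra R S]

theorem injective_restrict [Module.Flat R S] (J : Type u) [AddCommGroup J] [Module S J] [Module R J]
    [IsScalarTower R S J] (hJ : Module.Injective S J) : Module.Injective R J := by
  refine ⟨fun X Y _ _ _ _ f hf g => ?_⟩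
  have hinj : Function.Injective (f.baseChange S) :=
    Module.Flat.lTensor_preserves_injective_linearMap (M := S) f hf
  obtain ⟨h, hh⟩ := hJ.out (f.baseChange S) hinj (LinearMap.liftBaseChange S g)
  refine ⟨(h.restrictScalars R) ∘ₗ (TensorProduct.mk R S Y 1), fun x => ?_⟩
  have := hh (1 ⊗ₜ x)
  simpa using this

theorem jm_baseChange [Module.Flat R S] {A B : Type u} [AddCommGroup A] [Module R A]
    [AddCommGroup B] [Module R B] {f : A →ₗ[R] B} (hf : Jm f) : Jm (f.baseChange S) := by
  intro J _ _ hJ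
  let _ : Module R J := Module.compHom J (algebraMap R S)
  have : IsScalarTower R S J := IsScalarTower.of_algebraMap_smul fun r x => rfl
  have h := hf J (injective_restrict (S := S) J hJ)
  have key : ∀ z, AlgebraTensorModule.cancelBaseChange R S S J B ((f.baseChange S).lTensor J z) =
      f.lTensor J (AlgebraTensorModule.cancelBaseChange R S S J A z) := by
    intro z
    induction z with
    | zero => simp
    | add x y hx hy => simp only [map_add, hx, hy]
    | tmul x y =>
      induction y with
      | zero => simp
      | add y y' hx hy => simp only [TensorProduct.tmul_add, map_add, hx, hy]
      | tmul s y => simp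
  intro x y hxy
  apply (AlgebraTensorModule.cancelBaseChange R S S J A).injective
  apply h
  rw [← key, ← key, hxy]

theorem ses_baseChange [Module.Flat R S] {A B C : Type u} [AddCommGroup A] [Module R A]
    [AddCommGroup B] [Module R B] [AddCommGroup C] [Module R C] {f : A →ₗ[R] B} {g : B →ₗ[R] C}
    (h : SES f g) : SES (f.baseChange S) (g.baseChange S) :=
  ⟨Module.Flat.lTensor_preserves_injective_linearMap (M := S) f h.1,
    lTensor_exact S h.2.1 h.2.2, LinearMap.lTensor_surjective S h.2.2⟩

theorem CoStep.baseChange [Module.Flat R S] {X Q : Type u} [AddCommGroup X] [Module R X]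
    [AddCommGroup Q] [Module R Q] (h : CoStep R X Q) : CoStep S (S ⊗[R] X) (S ⊗[R] Q) := by
  obtain ⟨G, _, _, f, g, h1, h2, h3⟩ := h
  exact ⟨S ⊗[R] G, inferInstance, inferInstance, f.baseChange S, g.baseChange S,
    ses_baseChange h1, inferInstance, jm_baseChange h3⟩

theorem exists_inj_embedding (N : Type u) [AddCommGroup N] [Module S N] :
    ∃ (J : Type u) (_ : AddCommGroup J) (_ : Module S J) (j : N →ₗ[S] J),
      Module.Injective S J ∧ Function.Injective j := by
  let X := ModuleCat.of S N
  refine ⟨(Injective.under X : ModuleCat.{u} S), inferInstance, inferInstance,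
    (Injective.ι X).hom, ?_, ?_⟩
  · have h : Injective (Injective.under X) := inferInstance
    exact (Module.injective_iff_injective_object S (Injective.under X : ModuleCat.{u} S)).2 h
  · exact (ModuleCat.mono_iff_injective _).1 inferInstance

theorem jm_descend [Module.FaithfullyFlat R S] {M G : Type u} [AddCommGroup M] [Module R M]
    [AddCommGroup G] [Module S G] [Module R G] [IsScalarTower R S G]
    (a : S ⊗[R] M →ₗ[S] G) (ha : Jm a) :
    Jm ((a.restrictScalars R) ∘ₗ (TensorProduct.mk R S M 1)) := by
  intro E _ _ hE
  obtain ⟨J, _, _, j, hJ, hj⟩ := exists_inj_embedding (S := S) (S ⊗[R] E)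
  let _ : Module R J := Module.compHom J (algebraMap R S)
  have : IsScalarTower R S J := IsScalarTower.of_algebraMap_smul fun r x => rfl
  let i : E →ₗ[R] J := (j.restrictScalars R) ∘ₗ (TensorProduct.mk R S E 1)
  have hi : Function.Injective i := by
    rw [injective_iff_map_eq_zero]
    intro x hx
    have h1 : (1 : S) ⊗ₜ[R] x = 0 := hj (by rw [map_zero]; exact hx)
    exact (Module.FaithfullyFlat.one_tmul_eq_zero_iff R _ x).1 h1
  obtain ⟨p, hp⟩ := hE.out i hi LinearMap.id
  have hiM : Function.Injective (i.rTensor M) := by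
    apply Function.LeftInverse.injective (g := p.rTensor M)
    intro z
    rw [← LinearMap.comp_apply, ← LinearMap.rTensor_comp,
      show p ∘ₗ i = LinearMap.id from LinearMap.ext hp, LinearMap.rTensor_id, LinearMap.id_apply]
  let f := (a.restrictScalars R) ∘ₗ (TensorProduct.mk R S M 1)
  let ψ : J ⊗[R] G →ₗ[R] J ⊗[S] G := TensorProduct.mapOfCompatibleSMul S R R J G
  have key : ∀ w : J ⊗[R] M, ψ (f.lTensor J w) =
      a.lTensor J ((AlgebraTensorModule.cancelBaseChange R S S J M).symm w) := by
    intro w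
    induction w with
    | zero => simp
    | add x y hx hy => simp only [map_add, hx, hy]
    | tmul x y => simp [ψ, f]
  have h2 : Function.Injective (f.lTensor J) := by
    intro x y hxy
    apply (AlgebraTensorModule.cancelBaseChange R S S J M).symm.injective
    apply ha J hJ
    rw [← key, ← key, hxy]
  intro x y hxy
  apply hiM
  apply h2
  rw [lr_comm, lr_comm]
  exact congrArg _ hxy

theorem InE.descend [IsNoetherianRing S] [Module.FaithfullyFlat R S] {M : Type u}
    [AddCommGroup M] [Module R M] (h : InE S (S ⊗[R] M)) : InE R M := by
  refine ⟨fun X _ _ => InE S (S ⊗[R] X), ?_, h⟩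
  intro X _ _ hX
  obtain ⟨Q, _, _, ⟨G, _, _, a, g, h1, h2, h3⟩, -⟩ := hX.unfold
  let _ : Module R G := Module.compHom G (algebraMap R S)
  have : IsScalarTower R S G := IsScalarTower.of_algebraMap_smul fun r x => rfl
  have hG : Module.Flat R G := Module.Flat.trans R S G
  let f := (a.restrictScalars R) ∘ₗ (TensorProduct.mk R S X 1)
  have hf : Jm f := jm_descend a h3
  have hfi : Function.Injective f := by
    rw [injective_iff_map_eq_zero]
    intro x hx
    have h1 : (1 : S) ⊗ₜ[R] x = 0 := h1.1 (by rw [map_zero]; exact hx)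
    exact (Module.FaithfullyFlat.one_tmul_eq_zero_iff R _ x).1 h1
  have hs := ses_mkQ f hfi
  exact ⟨G ⧸ LinearMap.range f, inferInstance, inferInstance, ⟨G, _, _, f, _, hs, hG, hf⟩,
    hX.coker (ses_baseChange hs) (jm_baseChange hf)⟩

end bc

theorem tor_iff {R : Type u} [CommRing R] (n : ℕ) (E M : Type u) [AddCommGroup E] [Module R E]
    [AddCommGroup M] [Module R M] :
    Subsingleton (((Tor (ModuleCat.{u} R) (n + 1)).obj
              (ModuleCat.of R E)).obj (ModuleCat.of R M)) ↔ Tvan R n E M := by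
  let P := ProjectiveResolution.of (ModuleCat.of R M)
  let F := (MonoidalCategory.tensoringLeft (ModuleCat.{u} R)).obj (ModuleCat.of R E)
  have hfl : ∀ k, Module.Flat R (P.complex.X k) := fun k => by
    have := (IsProjective.iff_projective (R := R) (P.complex.X k)).2 (P.projective k)
    infer_instance
  have h1 := tvan_iff_exact (R := R) (fun k => P.complex.X k) (fun k => (P.complex.d (k + 1) k).hom)
    (M := M) (P.π.f 0).hom ((ModuleCat.epi_iff_surjective _).1 inferInstance)
    ((ShortComplex.ShortExact.moduleCat_exact_iff_function_exact _).1 P.exact₀)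
    (fun k => (ShortComplex.ShortExact.moduleCat_exact_iff_function_exact _).1 (P.exact_succ k))
    n E
  refine Iff.trans ?_ h1.symm
  rw [← ModuleCat.isZero_iff_subsingleton]
  change Limits.IsZero ((F.leftDerived (n + 1)).obj (ModuleCat.of R M)) ↔ _
  rw [(P.isoLeftDerivedObj F (n + 1)).isZero_iff]
  change Limits.IsZero (HomologicalComplex.homology _ (n + 1)) ↔ _
  rw [← HomologicalComplex.exactAt_iff_isZero_homology,
    HomologicalComplex.exactAt_iff' _ (n + 2) (n + 1) n (by simp only [ChainComplex.prev]; rfl)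
      (by simp), ShortComplex.ShortExact.moduleCat_exact_iff_function_exact]
  rfl

theorem isGorensteinFlat_iff_baseChange_isGorensteinFlat_and_tor_vanishing
    (R S : Type u) [CommRing R] [CommRing S] [IsNoetherianRing R] [IsNoetherianRing S]
    [Algebra R S] [Module.FaithfullyFlat R S]
    (M : Type u) [AddCommGroup M] [Module R M] :
    IsGorensteinFlat R M ↔
      (IsGorensteinFlat S (S ⊗[R] M) ∧
        ∀ (E : Type u) [AddCommGroup E] [Module R E], Module.Injective R E →
          ∀ i : ℕ, 1 ≤ i →
            Subsingleton (((Tor (ModuleCat.{u} R) i).obj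
              (ModuleCat.of R E)).obj (ModuleCat.of R M))) := by
  constructor
  · intro h
    obtain ⟨Z, hZ, ⟨e⟩⟩ := chain_of_gf h
    constructor
    · exact gf_congr (e.baseChange R S M (Z (-1)))
        (gf_of_chain (fun i => ModuleCat.of S (S ⊗[R] Z i)) fun i => (hZ i).baseChange)
    · intro E _ _ hE i hi
      obtain ⟨n, rfl⟩ : ∃ n, i = n + 1 := ⟨i - 1, by omega⟩
      exact (tor_iff n E M).2 (Tvan.of_chain Z hZ e E hE n)
  · rintro ⟨h, ht⟩
    obtain ⟨Z, hZ, ⟨e⟩⟩ := chain_of_gf h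
    exact gf_of_InE (InE.of_chain Z hZ e).descend
      fun E _ _ hE n => (tor_iff n E M).1 (ht E hE (n + 1) (by omega))
end
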